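/- arXiv:1511.07240 — 6 statements merged into one kernel-verified Lean document; each statement's English description precedes it below -/
import Mathlib

section
/- The supremum, over all measurable μ : ℂ → ℂ with |μ| ≤ 1 a.e. on the unit disk 𝔻 and μ = 0 outside 𝔻, of the asymptotic variance σ²(Sμ) — where Sμ(z) = -(1/π)∫_𝔻 μ(ζ)/(ζ−z)² dA(ζ) for |z| > 1 and σ²(g) := limsup_{R→1⁺} (1/(2π·log(1/(R−1)))) ∫₀^{2π} |g(R e^{iθ})|² R dθ — is equal to Σ²_ℍ, the supremum over all measurable ν : ℂ → ℂ with |ν| ≤ 1 a.e. on the lower half-plane {Im ζ < 0} and ν = 0 elsewhere, of σ²_{[0,1]}(S^#ν), where S^#ν(z) = -(1/π)∫_{Im ζ<0} ν(ζ)[(ζ−z)⁻² − ζ⁻²] dA(ζ) for Im z > 0 and σ²_{[0,1]}(b) := limsup_{y→0⁺} (1/log(1/y)) ∫₀¹ |b(x+iy)|² dx. -/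
open Complex MeasureTheory Filter Topology Set

/-- The derivative of the Beurling transform of `μ`:
`Tμ(z) = -(2/π) ∫_{Im ζ < 0} μ(ζ)/(ζ−z)³ dA(ζ)`. -/
noncomputable def Tderiv (μ : ℂ → ℂ) (z : ℂ) : ℂ :=
  -(2 / (Real.pi : ℂ)) * ∫ ζ in {ζ : ℂ | ζ.im < 0}, μ ζ / (ζ - z)^3

/-- The modified Beurling transform
`S^#μ(z) = -(1/π) ∫_{Im ζ<0} μ(ζ)[(ζ−z)⁻² − ζ⁻²] dA(ζ)`. -/
noncomputable def Ssharp (μ : ℂ → ℂ) (z : ℂ) : ℂ :=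
  -(1 / (Real.pi : ℂ)) * ∫ ζ in {ζ : ℂ | ζ.im < 0}, μ ζ * (((ζ - z)^2)⁻¹ - (ζ^2)⁻¹)

/-- The asymptotic variance over `[0,1]` of a function on the upper half-plane:
`σ²_{[0,1]}(b) = limsup_{y→0⁺} (1/log(1/y)) ∫₀¹ |b(x+iy)|² dx`. -/
noncomputable def sigma01 (b : ℂ → ℂ) : ℝ :=
  Filter.limsup (fun y : ℝ =>
    (1 / Real.log (1 / y)) *
      ∫ x in (0:ℝ)..1, ‖b ((x : ℂ) + (y : ℂ) * Complex.I)‖^2) (𝓝[>] (0:ℝ))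

/-- `Σ²_ℍ`: the supremum of `σ²_{[0,1]}(S^#μ)` over all measurable `μ` with
`|μ| ≤ 1` a.e. supported in the lower half-plane. -/
noncomputable def SigmaSqH : ℝ :=
  sSup {v : ℝ | ∃ μ : ℂ → ℂ, Measurable μ ∧ (∀ᵐ ζ : ℂ, ‖μ ζ‖ ≤ 1) ∧
    (∀ ζ : ℂ, 0 ≤ ζ.im → μ ζ = 0) ∧ v = sigma01 (Ssharp μ)}

/-- The Beurling transform of `μ` supported in the unit disk, for `|z| > 1`:
`Sμ(z) = -(1/π) ∫_𝔻 μ(ζ)/(ζ−z)² dA(ζ)`. -/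
noncomputable def Sdisk (μ : ℂ → ℂ) (z : ℂ) : ℂ :=
  -(1 / (Real.pi : ℂ)) * ∫ ζ in Metric.ball (0:ℂ) 1, μ ζ / (ζ - z)^2

/-- The asymptotic variance of a function on the exterior disk:
`σ²(g) = limsup_{R→1⁺} (1/(2π log(1/(R−1)))) ∫₀^{2π} |g(Re^{iθ})|² R dθ`. -/
noncomputable def sigmaDisk (g : ℂ → ℂ) : ℝ :=
  Filter.limsup (fun R : ℝ =>
    (1 / (2 * Real.pi * Real.log (1 / (R - 1)))) *
      ∫ θ in (0:ℝ)..(2 * Real.pi),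
        ‖g ((R : ℂ) * Complex.exp ((θ : ℂ) * Complex.I))‖^2 * R) (𝓝[>] (1:ℝ))


lemma vs_limsup_le {ι : Type*} (l : Filter ι) [l.NeBot] (f g : ι → ℝ)
    (hf : ∀ᶠ y in l, 0 ≤ f y)
    (h1 : ∀ t > 0, ∀ᶠ y in l, f y ≤ (1 + t) * g y + t) (c : ℝ) (hc : ∀ᶠ y in l, g y ≤ c) :
    limsup f l ≤ c := by
  rw [limsup_eq]
  have hbdd : BddBelow {a | ∀ᶠ y in l, f y ≤ a} := by
    refine ⟨0, fun a ha => ?_⟩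
    obtain ⟨y, h1, h2⟩ := (hf.and ha).exists
    exact h1.trans h2
  have key : ∀ t > 0, sInf {a | ∀ᶠ y in l, f y ≤ a} ≤ (1 + t) * c + t := by
    intro t ht
    apply csInf_le hbdd
    filter_upwards [h1 t ht, hc] with y hy hcy
    nlinarith
  have hlim : Tendsto (fun t : ℝ => (1 + t) * c + t) (𝓝[>] 0) (𝓝 ((1 + 0) * c + 0)) := by
    apply tendsto_nhdsWithin_of_tendsto_nhds
    apply Continuous.tendsto (f := fun t : ℝ => (1 + t) * c + t)
    fun_prop
  have := ge_of_tendsto hlim (eventually_nhdsWithin_of_forall fun t ht => key t ht)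
  simpa using this

lemma vs_limsup_cmp {ι : Type*} (l : Filter ι) [l.NeBot] (f g : ι → ℝ)
    (hf : ∀ᶠ y in l, 0 ≤ f y) (hg : ∀ᶠ y in l, 0 ≤ g y)
    (h1 : ∀ t > 0, ∀ᶠ y in l, f y ≤ (1 + t) * g y + t)
    (h2 : ∀ t > 0, ∀ᶠ y in l, g y ≤ (1 + t) * f y + t) :
    limsup f l = limsup g l := by
  by_cases hne : ∃ c, ∀ᶠ y in l, g y ≤ c
  · obtain ⟨c, hc⟩ := hne
    have hc' : ∀ᶠ y in l, f y ≤ 2 * c + 1 := by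
      filter_upwards [h1 1 one_pos, hc] with y hy hcy
      linarith
    apply le_antisymm
    · conv_rhs => rw [limsup_eq]
      exact le_csInf ⟨c, hc⟩ fun b hb => vs_limsup_le l f g hf h1 b hb
    · conv_rhs => rw [limsup_eq]
      exact le_csInf ⟨_, hc'⟩ fun b hb => vs_limsup_le l g f hg h2 b hb
  · have hne' : ¬ ∃ c, ∀ᶠ y in l, f y ≤ c := by
      rintro ⟨c, hc⟩
      apply hne
      refine ⟨2 * c + 1, ?_⟩
      filter_upwards [h2 1 one_pos, hc] with y hy hcy
      linarith
    rw [limsup_eq, limsup_eq]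
    have e1 : {a | ∀ᶠ y in l, f y ≤ a} = ∅ := by
      ext a; simp only [mem_ofPred_eq, mem_empty_iff_false, iff_false]; exact fun h => hne' ⟨a, h⟩
    have e2 : {a | ∀ᶠ y in l, g y ≤ a} = ∅ := by
      ext a; simp only [mem_ofPred_eq, mem_empty_iff_false, iff_false]; exact fun h => hne ⟨a, h⟩
    rw [e1, e2]

/-- The good region. -/
def vsG : Set ℂ := {w | 0 < w.re ∧ w.re < 1 ∧ w.im < 0 ∧ -(w.re ^ 2) < w.im}
/-- The large box. -/
def vsB : Set ℂ := {w | -1 < w.re ∧ w.re < 2 ∧ -1 < w.im ∧ w.im < 0}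
/-- The fundamental box. -/
def vsP : Set ℂ := {w | 0 < w.re ∧ w.re < 1 ∧ -1 < w.im ∧ w.im < 0}

noncomputable def vsSG (ν : ℂ → ℂ) (z : ℂ) : ℂ :=
  -(1 / (Real.pi : ℂ)) * ∫ w in vsG, ν w / (w - z)^2

noncomputable def vsq (x : ℝ) : ℝ := x ^ (-(1/4) : ℝ) + (1 - x) ^ (-(1/4) : ℝ) + 1

lemma vs_meas_G : MeasurableSet vsG := by
  unfold vsG
  apply IsOpen.measurableSet
  apply IsOpen.and (isOpen_lt continuous_const Complex.continuous_re)
  apply IsOpen.and (isOpen_lt Complex.continuous_re continuous_const)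
  apply IsOpen.and (isOpen_lt Complex.continuous_im continuous_const)
  exact isOpen_lt (by fun_prop) Complex.continuous_im

lemma vs_meas_B : MeasurableSet vsB := by
  unfold vsB
  apply IsOpen.measurableSet
  apply IsOpen.and (isOpen_lt continuous_const Complex.continuous_re)
  apply IsOpen.and (isOpen_lt Complex.continuous_re continuous_const)
  apply IsOpen.and (isOpen_lt continuous_const Complex.continuous_im)
  exact isOpen_lt Complex.continuous_im continuous_const

lemma vs_open_P : IsOpen vsP := by
  unfold vsP
  apply IsOpen.and (isOpen_lt continuous_const Complex.continuous_re)
  apply IsOpen.and (isOpen_lt Complex.continuous_re continuous_const)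
  apply IsOpen.and (isOpen_lt continuous_const Complex.continuous_im)
  exact isOpen_lt Complex.continuous_im continuous_const

lemma vs_G_sub_P : vsG ⊆ vsP := by
  rintro w ⟨h1, h2, h3, h4⟩
  exact ⟨h1, h2, by nlinarith, h3⟩

lemma vs_P_sub_B : vsP ⊆ vsB := by
  rintro w ⟨h1, h2, h3, h4⟩
  exact ⟨by linarith, by linarith, h3, h4⟩

lemma vs_q_one (x : ℝ) (h0 : 0 < x) (h1 : x < 1) : 1 ≤ vsq x := by
  unfold vsq
  have := Real.rpow_nonneg h0.le (-(1/4))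
  have := Real.rpow_nonneg (sub_pos.2 h1).le (-(1/4))
  linarith

lemma vs_q_sq_integrable : IntervalIntegrable (fun x => vsq x ^ 2) volume 0 1 := by
  have i1 : IntervalIntegrable (fun x : ℝ => x ^ (-(1/2) : ℝ)) volume 0 1 :=
    intervalIntegral.intervalIntegrable_rpow' (by norm_num)
  have i2 : IntervalIntegrable (fun x : ℝ => (1 - x) ^ (-(1/2) : ℝ)) volume 0 1 := by
    have := (i1.comp_sub_left 1).symm
    simpa using this
  have i3 : IntervalIntegrable (fun x : ℝ => 3 * (x ^ (-(1/2) : ℝ) + (1 - x) ^ (-(1/2) : ℝ) + 1))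
      volume 0 1 := ((i1.add i2).add intervalIntegrable_const).const_mul 3
  refine i3.mono_fun ?_ ?_
  · apply Measurable.aestronglyMeasurable
    unfold vsq
    fun_prop
  · rw [uIoc_of_le zero_le_one]
    filter_upwards [ae_restrict_mem measurableSet_Ioc] with x hx
    have e : ∀ a : ℝ, 0 ≤ a → a ^ (-(1/2) : ℝ) = (a ^ (-(1/4) : ℝ)) ^ 2 := by
      intro a ha
      rw [← Real.rpow_natCast, ← Real.rpow_mul ha]; norm_num
    rw [e x hx.1.le, e (1 - x) (by linarith [hx.2])]
    rw [Real.norm_of_nonneg (by positivity), Real.norm_of_nonneg (by positivity)]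
    unfold vsq
    nlinarith [sq_nonneg (x ^ (-(1/4) : ℝ) - (1 - x) ^ (-(1/4) : ℝ)),
      sq_nonneg (x ^ (-(1/4) : ℝ) - 1), sq_nonneg ((1 - x) ^ (-(1/4) : ℝ) - 1)]

lemma vs_sq_le (a c b t : ℝ) (ht : 0 < t) (ha : 0 ≤ a) (h : a ≤ c + b) :
    a ^ 2 ≤ (1 + t) * c ^ 2 + (1 + 1 / t) * b ^ 2 := by
  have h1 : a ^ 2 ≤ (c + b) ^ 2 := pow_le_pow_left₀ ha h 2
  have h2 : 0 ≤ (t * c - b) ^ 2 / t := by positivity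
  have h3 : (t * c - b) ^ 2 / t = t * c ^ 2 - 2 * c * b + 1 / t * b ^ 2 := by
    field_simp
    ring
  nlinarith

lemma vs_L2 (F₁ F₂ : ℝ → ℂ) (C : ℝ)
    (h2 : IntervalIntegrable (fun x => ‖F₂ x‖ ^ 2) volume 0 1)
    (h : ∀ x ∈ Ioo (0:ℝ) 1, ‖F₁ x - F₂ x‖ ≤ C * vsq x) (t : ℝ) (ht : 0 < t) :
    ∫ x in (0:ℝ)..1, ‖F₁ x‖ ^ 2 ≤ (1 + t) * (∫ x in (0:ℝ)..1, ‖F₂ x‖ ^ 2) +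
      (1 + 1 / t) * (C ^ 2 * ∫ x in (0:ℝ)..1, vsq x ^ 2) := by
  have e : (1 + t) * (∫ x in (0:ℝ)..1, ‖F₂ x‖ ^ 2) +
      (1 + 1 / t) * (C ^ 2 * ∫ x in (0:ℝ)..1, vsq x ^ 2) =
      ∫ x in (0:ℝ)..1, ((1 + t) * ‖F₂ x‖ ^ 2 + (1 + 1/t) * (C ^ 2 * vsq x ^ 2)) := by
    rw [intervalIntegral.integral_add (h2.const_mul _)
      ((vs_q_sq_integrable.const_mul _).const_mul _)]
    simp only [intervalIntegral.integral_const_mul]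
  rw [e, intervalIntegral.integral_of_le zero_le_one, intervalIntegral.integral_of_le zero_le_one,
    integral_Ioc_eq_integral_Ioo, integral_Ioc_eq_integral_Ioo]
  apply integral_mono_of_nonneg
  · exact Eventually.of_forall fun x => by positivity
  · have := (h2.const_mul (1 + t)).add ((vs_q_sq_integrable.const_mul (C^2)).const_mul (1 + 1/t))
    exact (this.1).mono_set Ioo_subset_Ioc_self
  · filter_upwards [ae_restrict_mem measurableSet_Ioo] with x hx
    have hx1 := h x hx
    have h3 : ‖F₁ x‖ ≤ ‖F₂ x‖ + C * vsq x := by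
      have := norm_add_le (F₁ x - F₂ x) (F₂ x)
      rw [sub_add_cancel] at this; linarith
    have hb : 0 ≤ C * vsq x := (norm_nonneg _).trans hx1
    have hb2 : C ^ 2 * vsq x ^ 2 = (C * vsq x) ^ 2 := by ring
    simp only [hb2]
    generalize C * vsq x = b at *
    exact vs_sq_le _ _ _ _ ht (norm_nonneg _) h3

lemma vs_L2_int (F₁ F₂ : ℝ → ℂ) (C : ℝ) (hm : Measurable F₁)
    (h2 : IntervalIntegrable (fun x => ‖F₂ x‖ ^ 2) volume 0 1)
    (h : ∀ x ∈ Ioo (0:ℝ) 1, ‖F₁ x - F₂ x‖ ≤ C * vsq x) :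
    IntervalIntegrable (fun x => ‖F₁ x‖ ^ 2) volume 0 1 := by
  have := (h2.const_mul (1 + 1)).add
    ((vs_q_sq_integrable.const_mul (C^2)).const_mul (1 + 1/1))
  rw [intervalIntegrable_iff_integrableOn_Ioo_of_le zero_le_one] at this ⊢
  refine Integrable.mono this (by fun_prop) ?_
  filter_upwards [ae_restrict_mem measurableSet_Ioo] with x hx
  have hx1 := h x hx
  have h3 : ‖F₁ x‖ ≤ ‖F₂ x‖ + C * vsq x := by
    have := norm_add_le (F₁ x - F₂ x) (F₂ x)
    rw [sub_add_cancel] at this; linarith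
  have h4 := vs_sq_le _ _ _ 1 one_pos (norm_nonneg _) h3
  rw [Real.norm_of_nonneg (by positivity)]
  refine le_trans ?_ (le_abs_self _)
  calc _ ≤ _ := h4
    _ = _ := by ring

lemma vs_norm_le (a b p r : ℝ → ℝ) (hb : ∀ y, 0 ≤ b y)
    (hp : ∀ᶠ y in 𝓝[>] (0:ℝ), 0 < p y)
    (hp0 : Tendsto p (𝓝[>] (0:ℝ)) (𝓝 0))
    (hpr : ∀ s > 0, ∀ᶠ y in 𝓝[>] (0:ℝ), p y ≤ (1 + s) * r y)
    (hab : ∀ t > 0, ∃ M, ∀ᶠ y in 𝓝[>] (0:ℝ), a y ≤ (1 + t) * b y + M) :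
    ∀ t > 0, ∀ᶠ y in 𝓝[>] (0:ℝ), p y * a y ≤ (1 + t) * (r y * b y) + t := by
  intro t ht
  obtain ⟨s, hs0, hs⟩ : ∃ s > 0, (1 + s) * (1 + s) ≤ 1 + t := by
    refine ⟨min 1 (t / 3), by positivity, ?_⟩
    have h1 := min_le_left 1 (t / 3)
    have h2 := min_le_right 1 (t / 3)
    have h3 : 0 < min 1 (t / 3) := by positivity
    nlinarith
  obtain ⟨M, hM⟩ := hab s hs0
  have hpM : ∀ᶠ y in 𝓝[>] (0:ℝ), p y * M < t := by
    have : Tendsto (fun y => p y * M) (𝓝[>] (0:ℝ)) (𝓝 (0 * M)) := hp0.mul_const M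
    rw [zero_mul] at this
    exact this.eventually_lt_const ht
  filter_upwards [hp, hpr s hs0, hM, hpM] with y h1 h2 h3 h4
  have hr : 0 ≤ r y := by
    have : 0 < (1 + s) * r y := h1.trans_le h2
    exact (pos_of_mul_pos_right this (by linarith)).le
  calc p y * a y ≤ p y * ((1 + s) * b y + M) := by gcongr
    _ = p y * ((1 + s) * b y) + p y * M := by ring
    _ ≤ ((1 + s) * r y) * ((1 + s) * b y) + t := by
        have : 0 ≤ (1 + s) * b y := mul_nonneg (by linarith) (hb y)
        gcongr
    _ = ((1 + s) * (1 + s)) * (r y * b y) + t := by ring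
    _ ≤ _ := by
        have : 0 ≤ r y * b y := mul_nonneg hr (hb y)
        gcongr

lemma vs_norm_cmp (a b p r : ℝ → ℝ) (ha : ∀ y, 0 ≤ a y) (hb : ∀ y, 0 ≤ b y)
    (hp : ∀ᶠ y in 𝓝[>] (0:ℝ), 0 < p y) (hr : ∀ᶠ y in 𝓝[>] (0:ℝ), 0 < r y)
    (hp0 : Tendsto p (𝓝[>] (0:ℝ)) (𝓝 0)) (hr0 : Tendsto r (𝓝[>] (0:ℝ)) (𝓝 0))
    (hpr : Tendsto (fun y => p y / r y) (𝓝[>] (0:ℝ)) (𝓝 1))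
    (hab : ∀ t > 0, ∃ M, ∀ᶠ y in 𝓝[>] (0:ℝ), a y ≤ (1 + t) * b y + M)
    (hba : ∀ t > 0, ∃ M, ∀ᶠ y in 𝓝[>] (0:ℝ), b y ≤ (1 + t) * a y + M) :
    limsup (fun y => p y * a y) (𝓝[>] (0:ℝ)) = limsup (fun y => r y * b y) (𝓝[>] (0:ℝ)) := by
  apply vs_limsup_cmp
  · filter_upwards [hp] with y h using mul_nonneg h.le (ha y)
  · filter_upwards [hr] with y h using mul_nonneg h.le (hb y)
  · apply vs_norm_le a b p r hb hp hp0 _ hab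
    intro s hs
    filter_upwards [hr, hpr.eventually_le_const (show 1 < 1 + s by linarith)] with y h1 h2
    rwa [div_le_iff₀ h1] at h2
  · apply vs_norm_le b a r p ha hr hr0 _ hba
    have hpr' : Tendsto (fun y => (p y / r y)⁻¹) (𝓝[>] (0:ℝ)) (𝓝 1) := by
      simpa using hpr.inv₀ one_ne_zero
    intro s hs
    filter_upwards [hp, hpr'.eventually_le_const (show 1 < 1 + s by linarith)] with y h1 h2
    rwa [inv_div, div_le_iff₀ h1] at h2

lemma vs_log_tendsto : Tendsto (fun y : ℝ => Real.log (1 / y)) (𝓝[>] (0:ℝ)) atTop := by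
  simp only [one_div]
  exact Real.tendsto_log_atTop.comp tendsto_inv_nhdsGT_zero

lemma vs_r_tendsto : Tendsto (fun y : ℝ => 1 / Real.log (1 / y)) (𝓝[>] (0:ℝ)) (𝓝 0) := by
  have := tendsto_inv_atTop_zero.comp vs_log_tendsto
  refine this.congr fun y => ?_
  simp

lemma vs_r_pos : ∀ᶠ y in 𝓝[>] (0:ℝ), 0 < 1 / Real.log (1 / y) := by
  filter_upwards [vs_log_tendsto.eventually_gt_atTop 0] with y hy
  positivity

lemma vs_map : map (fun y : ℝ => Real.exp (2 * Real.pi * y)) (𝓝[>] (0:ℝ)) = 𝓝[>] (1:ℝ) := by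
  have hpi := Real.pi_pos
  apply le_antisymm
  · change Tendsto _ _ _
    apply tendsto_nhdsWithin_of_tendsto_nhds_of_eventually_within
    · apply tendsto_nhdsWithin_of_tendsto_nhds
      have : Continuous (fun y : ℝ => Real.exp (2 * Real.pi * y)) := by fun_prop
      simpa using this.tendsto 0
    · filter_upwards [self_mem_nhdsWithin] with y hy
      have hy : 0 < y := hy
      have : 0 < 2 * Real.pi * y := by positivity
      simpa using this
  · have hg : Tendsto (fun R : ℝ => Real.log R / (2 * Real.pi)) (𝓝[>] 1) (𝓝[>] 0) := by
      apply tendsto_nhdsWithin_of_tendsto_nhds_of_eventually_within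
      · apply tendsto_nhdsWithin_of_tendsto_nhds
        have : ContinuousAt (fun R : ℝ => Real.log R / (2 * Real.pi)) 1 :=
          (Real.continuousAt_log one_ne_zero).div_const _
        simpa using this.tendsto
      · filter_upwards [self_mem_nhdsWithin] with y hy
        have hy : 1 < y := hy
        have := Real.log_pos hy
        simp only [mem_Ioi]
        positivity
    have h2 := map_mono (m := fun y : ℝ => Real.exp (2 * Real.pi * y)) hg
    refine le_trans (le_of_eq ?_) h2
    rw [map_map]
    conv_lhs => rw [← map_id (f := 𝓝[>] (1:ℝ))]
    apply Filter.map_congr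
    filter_upwards [self_mem_nhdsWithin] with y hy
    have hy : 1 < y := hy
    simp only [id, Function.comp]
    rw [mul_div_cancel₀ _ (by positivity), Real.exp_log (by linarith)]

noncomputable def vsp (y : ℝ) : ℝ :=
  Real.exp (2 * Real.pi * y) / Real.log (1 / (Real.exp (2 * Real.pi * y) - 1))

lemma vs_p_log : Tendsto (fun y : ℝ => Real.log (1 / (Real.exp (2 * Real.pi * y) - 1)) /
    Real.log (1 / y)) (𝓝[>] (0:ℝ)) (𝓝 1) := by
  have hpi := Real.pi_pos
  have hder : HasDerivAt (fun y : ℝ => Real.exp (2 * Real.pi * y)) (2 * Real.pi) 0 := by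
    have h1 : HasDerivAt (fun y : ℝ => 2 * Real.pi * y) (2 * Real.pi) 0 := by
      simpa using (hasDerivAt_id (0:ℝ)).const_mul (2 * Real.pi)
    simpa using h1.exp
  have hsl : Tendsto (fun y : ℝ => (Real.exp (2 * Real.pi * y) - 1) / y) (𝓝[>] (0:ℝ))
      (𝓝 (2 * Real.pi)) := by
    have := hder.hasDerivWithinAt (s := Ioi 0)
    rw [hasDerivWithinAt_iff_tendsto_slope' (by simp)] at this
    refine this.congr fun y => ?_
    simp [slope_def_field]
  have hl := hsl.log (by positivity)
  have h0 := (hl.mul vs_r_tendsto)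
  rw [mul_zero] at h0
  have h1 : Tendsto (fun y : ℝ => 1 - Real.log ((Real.exp (2 * Real.pi * y) - 1) / y) *
      (1 / Real.log (1 / y))) (𝓝[>] (0:ℝ)) (𝓝 (1 - 0)) := tendsto_const_nhds.sub h0
  rw [sub_zero] at h1
  refine h1.congr' ?_
  filter_upwards [self_mem_nhdsWithin, vs_log_tendsto.eventually_gt_atTop 0] with y hy hy2
  have hy : 0 < y := hy
  have h3 : 0 < Real.exp (2 * Real.pi * y) - 1 := by
    have : 0 < 2 * Real.pi * y := by positivity
    simpa using this
  rw [Real.log_div h3.ne' hy.ne']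
  simp only [one_div, Real.log_inv] at hy2 ⊢
  have : Real.log y ≠ 0 := by linarith
  field_simp
  ring

lemma vs_p_ratio : Tendsto (fun y : ℝ => vsp y / (1 / Real.log (1 / y))) (𝓝[>] (0:ℝ)) (𝓝 1) := by
  have h1 := vs_p_log.inv₀ one_ne_zero
  have h2 : Tendsto (fun y : ℝ => Real.exp (2 * Real.pi * y)) (𝓝[>] (0:ℝ)) (𝓝 1) := by
    apply tendsto_nhdsWithin_of_tendsto_nhds
    have : Continuous (fun y : ℝ => Real.exp (2 * Real.pi * y)) := by fun_prop
    simpa using this.tendsto 0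
  have h3 := h2.mul h1
  simp only [inv_one, mul_one] at h3
  refine h3.congr fun y => ?_
  unfold vsp
  rw [inv_div]
  simp only [div_eq_mul_inv, one_mul, inv_inv]
  ring

lemma vs_p_pos : ∀ᶠ y in 𝓝[>] (0:ℝ), 0 < vsp y := by
  filter_upwards [vs_p_log.eventually (lt_mem_nhds one_pos),
    vs_log_tendsto.eventually_gt_atTop 0] with y h1 h2
  unfold vsp
  have := (div_pos_iff_of_pos_right h2).1 h1
  positivity

lemma vs_p_zero : Tendsto vsp (𝓝[>] (0:ℝ)) (𝓝 0) := by
  have := vs_p_ratio.mul vs_r_tendsto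
  rw [one_mul] at this
  refine this.congr' ?_
  filter_upwards [vs_r_pos] with y hy
  rw [div_mul_cancel₀ _ hy.ne']

lemma vs_ab (F₁ F₂ : ℝ → ℝ → ℂ) (C : ℝ) (hm : ∀ y, Measurable (F₁ y))
    (h2 : ∀ y ∈ Ioo (0:ℝ) 1, IntervalIntegrable (fun x => ‖F₂ y x‖ ^ 2) volume 0 1)
    (h : ∀ y ∈ Ioo (0:ℝ) 1, ∀ x ∈ Ioo (0:ℝ) 1, ‖F₁ y x - F₂ y x‖ ≤ C * vsq x) :
    (∀ t > 0, ∃ M, ∀ᶠ y in 𝓝[>] (0:ℝ), ∫ x in (0:ℝ)..1, ‖F₁ y x‖ ^ 2 ≤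
      (1 + t) * (∫ x in (0:ℝ)..1, ‖F₂ y x‖ ^ 2) + M) ∧
    (∀ t > 0, ∃ M, ∀ᶠ y in 𝓝[>] (0:ℝ), ∫ x in (0:ℝ)..1, ‖F₂ y x‖ ^ 2 ≤
      (1 + t) * (∫ x in (0:ℝ)..1, ‖F₁ y x‖ ^ 2) + M) := by
  have hmem : Ioo (0:ℝ) 1 ∈ 𝓝[>] (0:ℝ) := Ioo_mem_nhdsGT one_pos
  constructor
  · intro t ht
    refine ⟨(1 + 1 / t) * (C ^ 2 * ∫ x in (0:ℝ)..1, vsq x ^ 2), ?_⟩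
    filter_upwards [hmem] with y hy
    exact vs_L2 _ _ C (h2 y hy) (h y hy) t ht
  · intro t ht
    refine ⟨(1 + 1 / t) * (C ^ 2 * ∫ x in (0:ℝ)..1, vsq x ^ 2), ?_⟩
    filter_upwards [hmem] with y hy
    refine vs_L2 _ _ C (vs_L2_int _ _ C (hm y) (h2 y hy) (h y hy)) ?_ t ht
    intro x hx
    rw [norm_sub_rev]
    exact h y hy x hx

lemma vs_int_nonneg (F : ℝ → ℂ) : 0 ≤ ∫ x in (0:ℝ)..1, ‖F x‖ ^ 2 :=
  intervalIntegral.integral_nonneg zero_le_one fun x _ => by positivity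

lemma vs_sigma_H (b₁ b₂ : ℂ → ℂ) (C : ℝ) (hm : Measurable b₁)
    (h2 : ∀ y ∈ Ioo (0:ℝ) 1, IntervalIntegrable
      (fun x : ℝ => ‖b₂ ((x : ℂ) + (y : ℂ) * Complex.I)‖ ^ 2) volume 0 1)
    (h : ∀ y ∈ Ioo (0:ℝ) 1, ∀ x ∈ Ioo (0:ℝ) 1, ‖b₁ ((x : ℂ) + (y : ℂ) * Complex.I) -
      b₂ ((x : ℂ) + (y : ℂ) * Complex.I)‖ ≤ C * vsq x) :
    sigma01 b₁ = sigma01 b₂ := by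
  have := vs_ab (fun y x => b₁ ((x : ℂ) + (y : ℂ) * Complex.I))
    (fun y x => b₂ ((x : ℂ) + (y : ℂ) * Complex.I)) C (fun y => by fun_prop) h2 h
  unfold sigma01
  refine vs_norm_cmp _ _ _ _ (fun y => vs_int_nonneg _) (fun y => vs_int_nonneg _) vs_r_pos
    vs_r_pos vs_r_tendsto vs_r_tendsto ?_ this.1 this.2
  refine tendsto_const_nhds.congr' ?_
  filter_upwards [vs_r_pos] with y hy
  rw [div_self hy.ne']

noncomputable def vsφ (w : ℂ) : ℂ := Complex.exp (-(2 * Real.pi * Complex.I) * w)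

lemma vs_disk_int (g : ℂ → ℂ) (y : ℝ) :
    (1 / (2 * Real.pi * Real.log (1 / (Real.exp (2 * Real.pi * y) - 1)))) *
      ∫ θ in (0:ℝ)..(2 * Real.pi),
        ‖g (((Real.exp (2 * Real.pi * y) : ℝ) : ℂ) * Complex.exp ((θ : ℂ) * Complex.I))‖^2 *
          Real.exp (2 * Real.pi * y) =
    vsp y * ∫ x in (0:ℝ)..1, ‖g (vsφ ((x : ℂ) + (y : ℂ) * Complex.I))‖ ^ 2 := by
  have hpi := Real.pi_pos
  have key := intervalIntegral.integral_comp_sub_mul (a := 0) (b := 1)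
    (fun θ : ℝ => ‖g ((Real.exp (2 * Real.pi * y) : ℂ) * Complex.exp ((θ : ℂ) * Complex.I))‖ ^ 2)
    (c := 2 * Real.pi) (by positivity) (2 * Real.pi)
  have e2 : ∀ x : ℝ, (Real.exp (2 * Real.pi * y) : ℂ) *
      Complex.exp (((2 * Real.pi - 2 * Real.pi * x : ℝ) : ℂ) * Complex.I) =
      vsφ ((x : ℂ) + (y : ℂ) * Complex.I) := by
    intro x
    unfold vsφ
    rw [Complex.ofReal_exp, ← Complex.exp_add, Complex.exp_eq_exp_iff_exists_int]
    refine ⟨1, ?_⟩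
    push_cast
    linear_combination (2 * Real.pi * y : ℂ) * Complex.I_sq
  simp only [e2] at key
  rw [key, intervalIntegral.integral_mul_const]
  simp only [mul_one, sub_self, mul_zero, sub_zero, smul_eq_mul]
  unfold vsp
  generalize (∫ (x : ℝ) in 0..2 * Real.pi,
    ‖g (((Real.exp (2 * Real.pi * y) : ℝ) : ℂ) * Complex.exp ((x : ℂ) * Complex.I))‖ ^ 2) = A
  field_simp

lemma vs_sigma_D (g b₂ : ℂ → ℂ) (C : ℝ) (hm : Measurable g)
    (h2 : ∀ y ∈ Ioo (0:ℝ) 1, IntervalIntegrable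
      (fun x : ℝ => ‖b₂ ((x : ℂ) + (y : ℂ) * Complex.I)‖ ^ 2) volume 0 1)
    (h : ∀ y ∈ Ioo (0:ℝ) 1, ∀ x ∈ Ioo (0:ℝ) 1, ‖g (vsφ ((x : ℂ) + (y : ℂ) * Complex.I)) -
      b₂ ((x : ℂ) + (y : ℂ) * Complex.I)‖ ≤ C * vsq x) :
    sigmaDisk g = sigma01 b₂ := by
  have hmφ : Measurable vsφ := by unfold vsφ; fun_prop
  have := vs_ab (fun y x => g (vsφ ((x : ℂ) + (y : ℂ) * Complex.I)))
    (fun y x => b₂ ((x : ℂ) + (y : ℂ) * Complex.I)) C (fun y => by fun_prop) h2 h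
  have e := vs_norm_cmp
    (fun y => ∫ x in (0:ℝ)..1, ‖g (vsφ ((x : ℂ) + (y : ℂ) * Complex.I))‖ ^ 2)
    (fun y => ∫ x in (0:ℝ)..1, ‖b₂ ((x : ℂ) + (y : ℂ) * Complex.I)‖ ^ 2)
    vsp (fun y => 1 / Real.log (1 / y))
    (fun y => vs_int_nonneg _) (fun y => vs_int_nonneg _) vs_p_pos
    vs_r_pos vs_p_zero vs_r_tendsto vs_p_ratio this.1 this.2
  have e' : sigmaDisk g = limsup (fun y => vsp y *
      ∫ x in (0:ℝ)..1, ‖g (vsφ ((x : ℂ) + (y : ℂ) * Complex.I))‖ ^ 2) (𝓝[>] (0:ℝ)) := by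
    unfold sigmaDisk
    rw [← vs_map, limsup, map_map, ← limsup]
    congr 1
    ext y
    exact vs_disk_int g y
  rw [e', e]
  rfl

lemma vs_int_1d (a : ℝ) (ha : a < 1) :
    IntegrableOn (fun s : ℝ => |s| ^ (-a)) (Ioo (-4) 4) := by
  have i1 : IntervalIntegrable (fun x : ℝ => x ^ (-a)) volume 0 4 :=
    intervalIntegral.intervalIntegrable_rpow' (by linarith)
  have i2 : IntervalIntegrable (fun x : ℝ => |x| ^ (-a)) volume 0 4 := by
    refine i1.congr ?_
    rw [uIoc_of_le (by norm_num)]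
    intro x hx
    simp only [abs_of_pos hx.1]
  have i3 : IntervalIntegrable (fun x : ℝ => |x| ^ (-a)) volume (-4) 0 := by
    have := (i2.comp_sub_left 0).symm
    simpa using this
  have := i3.trans i2
  rwa [intervalIntegrable_iff_integrableOn_Ioo_of_le (by norm_num)] at this

/-- the auxiliary box -/
def vsQ : Set ℂ := {u | u.re ∈ Ioo (-4 : ℝ) 4 ∧ u.im ∈ Ioo (-4 : ℝ) 4}

lemma vs_meas_Q : MeasurableSet vsQ := 
  (Complex.measurable_re measurableSet_Ioo).inter (Complex.measurable_im measurableSet_Ioo)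

lemma vs_int_prod (a b : ℝ) (ha : a < 1) (hb : b < 1) :
    IntegrableOn (fun u : ℂ => |u.re| ^ (-a) * |u.im| ^ (-b)) vsQ := by
  have h := Integrable.mul_prod (vs_int_1d a ha) (vs_int_1d b hb)
  rw [Measure.prod_restrict] at h
  have := (Complex.volume_preserving_equiv_real_prod.integrableOn_comp_preimage
    (MeasurableEquiv.measurableEmbedding _)).2 h
  exact this

lemma vs_rpow_prod {n s t a b : ℝ} (hs : 0 < s) (ht : 0 < t) (hsn : s ≤ n) (htn : t ≤ n)
    (ha : 0 ≤ a) (hb : 0 ≤ b) : n ^ (-(a + b)) ≤ s ^ (-a) * t ^ (-b) := by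
  have hn : 0 < n := hs.trans_le hsn
  rw [neg_add, Real.rpow_add hn]
  have h1 := Real.rpow_le_rpow_of_nonpos hs hsn (neg_nonpos.2 ha)
  have h2 := Real.rpow_le_rpow_of_nonpos ht htn (neg_nonpos.2 hb)
  have := Real.rpow_nonneg hn.le (-b)
  have := Real.rpow_nonneg hs.le (-a)
  gcongr

lemma vs_ae_re : ∀ᵐ u : ℂ, u.re ≠ 0 := by
  have h : volume {x : ℝ × ℝ | x.1 = 0} = 0 := by
    have : {x : ℝ × ℝ | x.1 = 0} = {0} ×ˢ univ := by ext; simp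
    rw [this, Measure.volume_eq_prod, Measure.prod_prod]; simp
  have := Complex.volume_preserving_equiv_real_prod.measure_preimage_equiv {x : ℝ × ℝ | x.1 = 0}
  rw [h] at this
  rw [ae_iff]
  convert this using 2
  ext u; simp [Complex.measurableEquivRealProd_apply]

lemma vs_ae_im : ∀ᵐ u : ℂ, u.im ≠ 0 := by
  have h : volume {x : ℝ × ℝ | x.2 = 0} = 0 := by
    have : {x : ℝ × ℝ | x.2 = 0} = univ ×ˢ {0} := by ext; simp
    rw [this, Measure.volume_eq_prod, Measure.prod_prod]; simp
  have := Complex.volume_preserving_equiv_real_prod.measure_preimage_equiv {x : ℝ × ℝ | x.2 = 0}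
  rw [h] at this
  rw [ae_iff]
  convert this using 2
  ext u; simp [Complex.measurableEquivRealProd_apply]

noncomputable def vsN : ℂ → ℝ := vsQ.indicator (fun u => ‖u‖ ^ (-(15/8) : ℝ))

lemma vs_N_nonneg (u : ℂ) : 0 ≤ vsN u :=
  indicator_nonneg (fun _ _ => Real.rpow_nonneg (norm_nonneg _) _) u

lemma vs_N_int : Integrable vsN := by
  unfold vsN
  rw [integrable_indicator_iff vs_meas_Q]
  refine Integrable.mono (vs_int_prod (15/16) (15/16) (by norm_num) (by norm_num)) ?_ ?_
  · apply Measurable.aestronglyMeasurable; fun_prop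
  · filter_upwards [ae_restrict_of_ae vs_ae_re, ae_restrict_of_ae vs_ae_im] with u h1 h2
    rw [Real.norm_of_nonneg (by positivity), Real.norm_of_nonneg (by positivity)]
    have := vs_rpow_prod (a := 15/16) (b := 15/16) (abs_pos.2 h1) (abs_pos.2 h2)
      (Complex.abs_re_le_norm u) (Complex.abs_im_le_norm u) (by norm_num) (by norm_num)
    convert this using 2
    norm_num

lemma vs_N_shift_int (z : ℂ) : Integrable (fun w => vsN (w - z)) := vs_N_int.comp_sub_right z

lemma vs_N_shift_le (z : ℂ) (s : Set ℂ) : ∫ w in s, vsN (w - z) ≤ ∫ u, vsN u := by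
  rw [← integral_sub_right_eq_self vsN z]
  exact setIntegral_le_integral (vs_N_shift_int z) (Eventually.of_forall fun w => vs_N_nonneg _)

lemma vs_G_int : IntegrableOn (fun u : ℂ => (‖u‖ ^ 2)⁻¹) vsG := by
  have hsub : vsG ⊆ vsQ := by
    rintro w ⟨h1, h2, h3, h4⟩
    exact ⟨⟨by linarith, by linarith⟩, ⟨by nlinarith, by linarith⟩⟩
  refine Integrable.mono ((vs_int_prod (1/2) (3/4) (by norm_num) (by norm_num)).mono_set hsub) ?_ ?_
  · apply Measurable.aestronglyMeasurable; fun_prop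
  · filter_upwards [ae_restrict_mem vs_meas_G] with u hu
    obtain ⟨h1, h2, h3, h4⟩ := hu
    rw [Real.norm_of_nonneg (by positivity), Real.norm_of_nonneg (by positivity)]
    rw [abs_of_pos h1, abs_of_neg h3]
    have e1 : (‖u‖ ^ 2)⁻¹ ≤ (u.re ^ 2)⁻¹ := by
      have := Complex.abs_re_le_norm u
      rw [abs_of_pos h1] at this
      gcongr
    have e2 : (u.re ^ 2)⁻¹ = u.re ^ (-(1/2) : ℝ) * (u.re ^ 2) ^ (-(3/4) : ℝ) := by
      rw [← Real.rpow_natCast, ← Real.rpow_mul h1.le, ← Real.rpow_neg h1.le, ← Real.rpow_add h1]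
      norm_num
    have e3 : (u.re ^ 2) ^ (-(3/4) : ℝ) ≤ (-u.im) ^ (-(3/4) : ℝ) :=
      Real.rpow_le_rpow_of_nonpos (by linarith) (by linarith) (by norm_num)
    rw [e2] at e1
    refine e1.trans ?_
    have := Real.rpow_nonneg h1.le (-(1/2))
    gcongr

lemma vs_pow_split {d x : ℝ} (hx0 : 0 < x) (hx1 : x < 1) (hd : x ^ 2 / 4 ≤ d ∨ 1 - x ≤ d) :
    (d ^ 2)⁻¹ ≤ 2 * vsq x * d ^ (-(15/8) : ℝ) := by
  have hd0 : 0 < d := by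
    rcases hd with h | h
    · exact lt_of_lt_of_le (by positivity) h
    · linarith
  have e : (d ^ 2)⁻¹ = d ^ (-(1/8) : ℝ) * d ^ (-(15/8) : ℝ) := by
    rw [← Real.rpow_add hd0, ← Real.rpow_natCast, ← Real.rpow_neg hd0.le]; norm_num
  rw [e]
  have hq1 := Real.rpow_nonneg hx0.le (-(1/4))
  have hq2 := Real.rpow_nonneg (sub_pos.2 hx1).le (-(1/4))
  have : d ^ (-(1/8) : ℝ) ≤ 2 * vsq x := by
    rcases hd with h | h
    · have h1 : d ^ (-(1/8) : ℝ) ≤ (x ^ 2 / 4) ^ (-(1/8) : ℝ) :=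
        Real.rpow_le_rpow_of_nonpos (by positivity) h (by norm_num)
      have h2 : (x ^ 2 / 4) ^ (-(1/8) : ℝ) = x ^ (-(1/4) : ℝ) * 4 ^ (1/8 : ℝ) := by
        rw [Real.div_rpow (by positivity) (by norm_num), ← Real.rpow_natCast,
          ← Real.rpow_mul hx0.le, Real.rpow_neg (by norm_num : (0:ℝ) ≤ 4), div_inv_eq_mul]
        norm_num
      have h3 : (4:ℝ) ^ (1/8 : ℝ) ≤ 2 := by
        have : (4:ℝ) ^ (1/8 : ℝ) ≤ (4:ℝ) ^ (1/2 : ℝ) :=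
          Real.rpow_le_rpow_of_exponent_le (by norm_num) (by norm_num)
        rw [← Real.sqrt_eq_rpow] at this
        refine this.trans ?_
        rw [show (4:ℝ) = 2 ^ 2 by norm_num, Real.sqrt_sq (by norm_num)]
      unfold vsq
      nlinarith
    · have h1 : d ^ (-(1/8) : ℝ) ≤ (1 - x) ^ (-(1/8) : ℝ) :=
        Real.rpow_le_rpow_of_nonpos (by linarith) h (by norm_num)
      have h2 : (1 - x) ^ (-(1/8) : ℝ) ≤ (1 - x) ^ (-(1/4) : ℝ) :=
        Real.rpow_le_rpow_of_exponent_ge (by linarith) (by linarith) (by norm_num)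
      unfold vsq
      linarith
  have := Real.rpow_nonneg hd0.le (-(15/8))
  gcongr

lemma vs_N_eq {w z : ℂ} (hw : w ∈ vsB) (hz0 : 0 < z.re) (hz1 : z.re < 1) (hy0 : 0 < z.im)
    (hy1 : z.im < 1) : vsN (w - z) = ‖w - z‖ ^ (-(15/8) : ℝ) := by
  obtain ⟨h1, h2, h3, h4⟩ := hw
  apply indicator_of_mem
  refine ⟨⟨?_, ?_⟩, ⟨?_, ?_⟩⟩ <;> simp only [Complex.sub_re, Complex.sub_im] <;> linarith

lemma vs_W_bound {w z : ℂ} (hw : w ∈ vsB \ vsG) (hz0 : 0 < z.re) (hz1 : z.re < 1) (hy0 : 0 < z.im)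
    (hy1 : z.im < 1) : (‖w - z‖ ^ 2)⁻¹ ≤ 2 * vsq z.re * vsN (w - z) := by
  rw [vs_N_eq hw.1 hz0 hz1 hy0 hy1]
  apply vs_pow_split hz0 hz1
  obtain ⟨⟨h1, h2, h3, h4⟩, hG⟩ := hw
  have hre := Complex.abs_re_le_norm (w - z)
  have him := Complex.abs_im_le_norm (w - z)
  simp only [Complex.sub_re, Complex.sub_im] at hre him
  have hre1 := (abs_le.1 hre).1
  have hre2 := (abs_le.1 hre).2
  have him1 := (abs_le.1 him).1
  by_cases c1 : w.re ≤ 0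
  · left; nlinarith
  by_cases c2 : 1 ≤ w.re
  · right; linarith
  push Not at c1 c2
  have c3 : w.im ≤ -(w.re ^ 2) := by
    by_contra hc
    exact hG ⟨c1, c2, h4, by linarith⟩
  left
  by_cases c4 : w.re < z.re / 2
  · nlinarith
  · push Not at c4
    nlinarith

lemma vs_one_bound {w z : ℂ} (hw : w ∈ vsB) (hz0 : 0 < z.re) (hz1 : z.re < 1) (hy0 : 0 < z.im)
    (hy1 : z.im < 1) : ‖w - z‖⁻¹ ≤ 6 * vsq z.re * vsN (w - z) := by
  rw [vs_N_eq hw hz0 hz1 hy0 hy1]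
  obtain ⟨h1, h2, h3, h4⟩ := hw
  have hpos : 0 < ‖w - z‖ := by
    have him := Complex.abs_im_le_norm (w - z)
    simp only [Complex.sub_im] at him
    have := (abs_le.1 him).1
    linarith
  have hle : ‖w - z‖ ≤ 6 := by
    have := Complex.norm_le_abs_re_add_abs_im (w - z)
    simp only [Complex.sub_re, Complex.sub_im] at this
    have a1 : |w.re - z.re| ≤ 3 := abs_le.2 ⟨by linarith, by linarith⟩
    have a2 : |w.im - z.im| ≤ 3 := abs_le.2 ⟨by linarith, by linarith⟩
    linarith
  set d := ‖w - z‖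
  have e : d⁻¹ = d ^ (7/8 : ℝ) * d ^ (-(15/8) : ℝ) := by
    rw [← Real.rpow_add hpos, ← Real.rpow_neg_one]; norm_num
  have e2 : d ^ (7/8 : ℝ) ≤ 6 := by
    have h1 : d ^ (7/8 : ℝ) ≤ 6 ^ (7/8 : ℝ) := Real.rpow_le_rpow hpos.le hle (by norm_num)
    have h2 : (6:ℝ) ^ (7/8 : ℝ) ≤ 6 ^ (1:ℝ) :=
      Real.rpow_le_rpow_of_exponent_le (by norm_num) (by norm_num)
    rw [Real.rpow_one] at h2
    linarith
  rw [e]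
  have := Real.rpow_nonneg hpos.le (-(15/8))
  have hq := vs_q_one z.re hz0 hz1
  have : d ^ (7/8 : ℝ) ≤ 6 * vsq z.re := by linarith
  gcongr

noncomputable def vsm (u : ℂ) : ℂ := (2 * Real.pi * Complex.I) / (1 - Complex.exp (2 * Real.pi * Complex.I * u))

lemma vs_m_add_one (u : ℂ) : vsm (u + 1) = vsm u := by
  unfold vsm
  rw [mul_add, mul_one, Complex.exp_add, Complex.exp_two_pi_mul_I, mul_one]

lemma vs_m_sub_one (u : ℂ) : vsm (u - 1) = vsm u := by
  rw [← vs_m_add_one (u - 1), sub_add_cancel]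

lemma vs_m_lower (u : ℂ) (h : |u.re| ≤ 1/2) (h' : u.im ≤ 0) :
    4 * ‖u‖ ≤ ‖1 - Complex.exp (2 * Real.pi * Complex.I * u)‖ := by
  have hpi := Real.pi_pos
  have hpi3 := Real.pi_gt_three
  apply (pow_le_pow_iff_left₀ (by positivity) (norm_nonneg _) two_ne_zero).1
  rw [mul_pow, Complex.sq_norm, Complex.sq_norm, Complex.normSq_apply, Complex.normSq_apply]
  simp only [Complex.sub_re, Complex.sub_im, Complex.exp_re, Complex.exp_im, Complex.one_re,
    Complex.one_im]
  have e1 : (2 * Real.pi * Complex.I * u).re = 2 * Real.pi * (-u.im) := by simp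
  have e2 : (2 * Real.pi * Complex.I * u).im = 2 * (Real.pi * u.re) := by simp; ring
  rw [e1, e2]
  set b := -u.im with hb
  have hb0 : 0 ≤ b := by linarith
  have him : u.im = -b := by rw [hb]; ring
  rw [him]
  set a := u.re
  set X := Real.exp (2 * Real.pi * b)
  have hX : 2 * Real.pi * b + 1 ≤ X := Real.add_one_le_exp _
  rw [Real.cos_two_mul, Real.sin_two_mul]
  have hs : 2 * |a| ≤ |Real.sin (Real.pi * a)| := by
    have hle : |Real.pi * a| ≤ Real.pi / 2 := by
      rw [abs_mul, abs_of_pos hpi]; nlinarith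
    have := Real.mul_abs_le_abs_sin hle
    rw [abs_mul, abs_of_pos hpi] at this
    calc 2 * |a| = 2 / Real.pi * (Real.pi * |a|) := by field_simp
      _ ≤ _ := this
  have hs2 : 4 * a ^ 2 ≤ Real.sin (Real.pi * a) ^ 2 := by
    rw [← sq_abs a, ← sq_abs (Real.sin _)]
    nlinarith [abs_nonneg a]
  have hcs := Real.sin_sq_add_cos_sq (Real.pi * a)
  set c := Real.cos (Real.pi * a)
  set s := Real.sin (Real.pi * a)
  have hX1 : 1 ≤ X := by nlinarith
  have id1 : (1 - X * (2 * c ^ 2 - 1)) * (1 - X * (2 * c ^ 2 - 1)) +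
      (0 - X * (2 * s * c)) * (0 - X * (2 * s * c)) = (X - 1) ^ 2 + 4 * X * s ^ 2 := by
    have hc2 : c ^ 2 = 1 - s ^ 2 := by linarith
    have : (1 - X * (2 * c ^ 2 - 1)) * (1 - X * (2 * c ^ 2 - 1)) +
      (0 - X * (2 * s * c)) * (0 - X * (2 * s * c)) =
      (1 - X * (2 * c ^ 2 - 1)) ^ 2 + 4 * X ^ 2 * s ^ 2 * c ^ 2 := by ring
    rw [this, hc2]; ring
  rw [id1]
  have h1 : (6 * b) ^ 2 ≤ (X - 1) ^ 2 := by
    apply pow_le_pow_left₀ (by linarith)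
    nlinarith
  have h2 : s ^ 2 ≤ X * s ^ 2 := by nlinarith [sq_nonneg s]
  nlinarith [sq_nonneg b]

lemma vs_m_bd (u : ℂ) (h : |u.re| ≤ 1/2) (h' : u.im < 0) :
    ‖vsm u‖ ≤ 5/3 * ‖u‖⁻¹ := by
  have hu : 0 < ‖u‖ := norm_pos_iff.2 (by rintro rfl; simp at h')
  have hl := vs_m_lower u h h'.le
  unfold vsm
  rw [norm_div]
  have e : ‖(2 * Real.pi * Complex.I : ℂ)‖ = 2 * Real.pi := by
    simp [abs_of_pos Real.pi_pos]
  rw [e, div_le_iff₀ (by linarith)]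
  calc 2 * Real.pi ≤ 5/3 * 4 := by linarith [Real.pi_lt_d2]
    _ = 5/3 * ‖u‖⁻¹ * (4 * ‖u‖) := by field_simp
    _ ≤ _ := by gcongr

lemma vs_k_diff0 : ∃ C : ℝ, 0 ≤ C ∧ ∀ u : ℂ, |u.re| ≤ 1/2 → u.im < 0 → -2 < u.im →
    ‖vsm u ^ 2 - 1 / u ^ 2‖ ≤ C * ‖u‖⁻¹ := by
  refine ⟨(Real.pi ^ 2 * Real.exp (2 * Real.pi * 3)) * (8/3), by positivity, ?_⟩
  intro u h h1 h2
  have hu0 : u ≠ 0 := by rintro rfl; simp at h1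
  have hu : 0 < ‖u‖ := norm_pos_iff.2 hu0
  have hl := vs_m_lower u h h1.le
  have hb := vs_m_bd u h h1
  have hD : 1 - Complex.exp (2 * Real.pi * Complex.I * u) ≠ 0 := by
    rw [← norm_pos_iff]; linarith
  have hu3 : ‖u‖ ≤ 3 := by
    have := Complex.norm_le_abs_re_add_abs_im u
    have a2 : |u.im| ≤ 2 := abs_le.2 ⟨by linarith, by linarith⟩
    linarith
  have e : ‖(2 * Real.pi * Complex.I : ℂ)‖ = 2 * Real.pi := by
    simp [abs_of_pos Real.pi_pos]
  have hexp := Complex.norm_exp_sub_sum_le_norm_mul_exp (2 * Real.pi * Complex.I * u) 2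
  simp only [Finset.sum_range_succ, Finset.sum_range_zero, zero_add, pow_zero, pow_one,
    Nat.factorial_zero, Nat.factorial_one, Nat.cast_one, div_one] at hexp
  rw [norm_mul, e] at hexp
  have f1 : vsm u + 1 / u = -(Complex.exp (2 * Real.pi * Complex.I * u) -
      (1 + 2 * Real.pi * Complex.I * u)) / (u * (1 - Complex.exp (2 * Real.pi * Complex.I * u))) := by
    unfold vsm
    field_simp
    ring
  have g1 : ‖vsm u + 1 / u‖ ≤ Real.pi ^ 2 * Real.exp (2 * Real.pi * 3) := by
    rw [f1, norm_div, norm_neg, norm_mul, div_le_iff₀ (by positivity)]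
    calc _ ≤ _ := hexp
      _ ≤ (2 * Real.pi * ‖u‖) ^ 2 * Real.exp (2 * Real.pi * 3) := by
          have := Real.pi_pos
          gcongr
      _ = Real.pi ^ 2 * Real.exp (2 * Real.pi * 3) * (‖u‖ * (4 * ‖u‖)) := by ring
      _ ≤ _ := by gcongr
  have g2 : ‖vsm u - 1 / u‖ ≤ 8/3 * ‖u‖⁻¹ := by
    calc _ ≤ ‖vsm u‖ + ‖1 / u‖ := norm_sub_le _ _
      _ ≤ 5/3 * ‖u‖⁻¹ + ‖u‖⁻¹ := by gcongr; simp
      _ = _ := by ring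
  have f2 : vsm u ^ 2 - 1 / u ^ 2 = (vsm u + 1 / u) * (vsm u - 1 / u) := by
    field_simp
    ring
  rw [f2, norm_mul]
  calc _ ≤ (Real.pi ^ 2 * Real.exp (2 * Real.pi * 3)) * (8/3 * ‖u‖⁻¹) := by gcongr
    _ = _ := by ring

lemma vs_m_sq (u : ℂ) (h : |u.re| < 1) (h' : u.im < 0) :
    ‖vsm u‖ ^ 2 ≤ 3 * ((‖u‖ ^ 2)⁻¹ + (‖u - 1‖ ^ 2)⁻¹ + (‖u + 1‖ ^ 2)⁻¹) := by
  have hgen : ∀ v : ℂ, |v.re| ≤ 1/2 → v.im < 0 → ‖vsm v‖ ^ 2 ≤ 3 * (‖v‖ ^ 2)⁻¹ := by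
    intro v h1 h2
    have := pow_le_pow_left₀ (norm_nonneg _) (vs_m_bd v h1 h2) 2
    rw [mul_pow, inv_pow] at this
    have h0 : 0 ≤ (‖v‖ ^ 2)⁻¹ := by positivity
    linarith
  have p1 : 0 ≤ (‖u‖ ^ 2)⁻¹ := by positivity
  have p2 : 0 ≤ (‖u - 1‖ ^ 2)⁻¹ := by positivity
  have p3 : 0 ≤ (‖u + 1‖ ^ 2)⁻¹ := by positivity
  obtain ⟨ha, hb⟩ := abs_lt.1 h
  by_cases c1 : |u.re| ≤ 1/2
  · have := hgen u c1 h'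
    linarith
  by_cases c2 : 0 ≤ u.re
  · have := hgen (u - 1) (by
      rw [abs_of_nonneg c2] at c1
      simp only [Complex.sub_re, Complex.one_re]
      exact abs_le.2 ⟨by linarith, by linarith⟩) (by simpa using h')
    rw [vs_m_sub_one] at this
    linarith
  · have := hgen (u + 1) (by
      rw [abs_of_neg (by linarith)] at c1
      simp only [Complex.add_re, Complex.one_re]
      exact abs_le.2 ⟨by linarith, by linarith⟩) (by simpa using h')
    rw [vs_m_add_one] at this
    linarith

lemma vs_k_diff : ∃ C : ℝ, 3 ≤ C ∧ ∀ u : ℂ, |u.re| < 1 → u.im < 0 → -2 < u.im →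
    ‖vsm u ^ 2 - 1 / u ^ 2‖ ≤ C * (‖u‖⁻¹ + (‖u - 1‖ ^ 2)⁻¹ + (‖u + 1‖ ^ 2)⁻¹) := by
  obtain ⟨C, hC, h⟩ := vs_k_diff0
  refine ⟨C + 8, by linarith, ?_⟩
  intro u h1 h2 h3
  have p0 : 0 ≤ ‖u‖⁻¹ := by positivity
  have p2 : 0 ≤ (‖u - 1‖ ^ 2)⁻¹ := by positivity
  have p3 : 0 ≤ (‖u + 1‖ ^ 2)⁻¹ := by positivity
  by_cases c1 : |u.re| ≤ 1/2
  · have := h u c1 h2 h3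
    nlinarith
  push Not at c1
  have hm := vs_m_sq u h1 h2
  have hu : 1/2 < ‖u‖ := c1.trans_le (Complex.abs_re_le_norm u)
  have hinv : (‖u‖ ^ 2)⁻¹ ≤ 2 * ‖u‖⁻¹ := by
    rw [sq, mul_inv]
    have : ‖u‖⁻¹ ≤ 2 := by
      rw [inv_le_comm₀ (by linarith) (by norm_num)]; linarith
    gcongr
  calc _ ≤ ‖vsm u ^ 2‖ + ‖1 / u ^ 2‖ := norm_sub_le _ _
    _ = ‖vsm u‖ ^ 2 + (‖u‖ ^ 2)⁻¹ := by simp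
    _ ≤ _ := by nlinarith

lemma vs_meas_param (s : Set ℂ) (k : ℂ → ℂ → ℂ) (hk : Measurable (Function.uncurry k)) (c : ℂ) :
    Measurable (fun z => c * ∫ ζ in s, k z ζ) := by
  have h : StronglyMeasurable (fun z => ∫ ζ in s, k z ζ) :=
    hk.stronglyMeasurable.integral_prod_right
  exact h.measurable.const_mul c

lemma vs_meas_Ssharp (ν : ℂ → ℂ) (hν : Measurable ν) : Measurable (Ssharp ν) := by
  apply vs_meas_param _ (fun z ζ => ν ζ * (((ζ - z)^2)⁻¹ - (ζ^2)⁻¹))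
  unfold Function.uncurry
  fun_prop

lemma vs_meas_Sdisk (ν : ℂ → ℂ) (hν : Measurable ν) : Measurable (Sdisk ν) := by
  apply vs_meas_param _ (fun z ζ => ν ζ / (ζ - z)^2)
  unfold Function.uncurry
  fun_prop

lemma vs_meas_SG (ν : ℂ → ℂ) (hν : Measurable ν) : Measurable (vsSG ν) := by
  apply vs_meas_param _ (fun z ζ => ν ζ / (ζ - z)^2)
  unfold Function.uncurry
  fun_prop

lemma vs_B_bdd : volume vsB < ⊤ := by
  refine lt_of_le_of_lt (measure_mono (t := Metric.ball 0 4) ?_) measure_ball_lt_top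
  rintro w ⟨h1, h2, h3, h4⟩
  rw [mem_ball_zero_iff]
  have := Complex.norm_le_abs_re_add_abs_im w
  have a1 : |w.re| < 2 := abs_lt.2 ⟨by linarith, by linarith⟩
  have a2 : |w.im| < 1 := abs_lt.2 ⟨by linarith, by linarith⟩
  linarith

lemma vs_ker_le {w z : ℂ} (hw : w.im < 0) (hz : 0 < z.im) : (‖w - z‖ ^ 2)⁻¹ ≤ (z.im ^ 2)⁻¹ := by
  have him := Complex.abs_im_le_norm (w - z)
  simp only [Complex.sub_im] at him
  have := (abs_le.1 him).1
  have : z.im ≤ ‖w - z‖ := by linarith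
  gcongr

lemma vs_ker_norm (ν : ℂ → ℂ) (hν1 : ∀ w, ‖ν w‖ ≤ 1) (w z : ℂ) :
    ‖ν w / (w - z) ^ 2‖ ≤ (‖w - z‖ ^ 2)⁻¹ := by
  rw [norm_div, norm_pow, div_eq_mul_inv]
  exact mul_le_of_le_one_left (by positivity) (hν1 w)

lemma vs_ker_int (ν : ℂ → ℂ) (hν : Measurable ν) (hν1 : ∀ w, ‖ν w‖ ≤ 1) (z : ℂ) (hz : 0 < z.im)
    (s : Set ℂ) (hs : MeasurableSet s) (hsB : s ⊆ vsB) :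
    IntegrableOn (fun w => ν w / (w - z) ^ 2) s := by
  refine Measure.integrableOn_of_bounded (M := (z.im ^ 2)⁻¹)
    (ne_top_of_lt ((measure_mono hsB).trans_lt vs_B_bdd)) ?_ ?_
  · apply Measurable.aestronglyMeasurable; fun_prop
  · filter_upwards [ae_restrict_mem hs] with w hw
    exact (vs_ker_norm ν hν1 w z).trans (vs_ker_le (hsB hw).2.2.2 hz)

lemma vs_SG_int (ν : ℂ → ℂ) (hν : Measurable ν) (hν1 : ∀ w, ‖ν w‖ ≤ 1) :
    ∀ y ∈ Ioo (0:ℝ) 1, IntervalIntegrable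
      (fun x : ℝ => ‖vsSG ν ((x : ℂ) + (y : ℂ) * Complex.I)‖ ^ 2) volume 0 1 := by
  intro y hy
  have hm := vs_meas_SG ν hν
  have hb : ∀ x : ℝ, ‖vsSG ν ((x : ℂ) + (y : ℂ) * Complex.I)‖ ≤
      ‖-(1 / (Real.pi : ℂ))‖ * ((y ^ 2)⁻¹ * volume.real vsG) := by
    intro x
    unfold vsSG
    rw [norm_mul]
    gcongr
    apply norm_setIntegral_le_of_norm_le_const
      ((measure_mono (vs_G_sub_P.trans vs_P_sub_B)).trans_lt vs_B_bdd)
    intro w hw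
    refine (vs_ker_norm ν hν1 w _).trans ?_
    have := vs_ker_le (w := w) (z := (x : ℂ) + (y : ℂ) * Complex.I) hw.2.2.1 (by simpa using hy.1)
    simpa using this
  rw [intervalIntegrable_iff_integrableOn_Ioo_of_le zero_le_one]
  refine Measure.integrableOn_of_bounded
    (M := (‖-(1 / (Real.pi : ℂ))‖ * ((y ^ 2)⁻¹ * volume.real vsG)) ^ 2) (by simp) ?_ ?_
  · apply Measurable.aestronglyMeasurable; fun_prop
  · filter_upwards with x
    rw [norm_pow, norm_norm]
    exact pow_le_pow_left₀ (norm_nonneg _) (hb x) 2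

lemma vs_far {ζ z : ℂ} (hz0 : 0 < z.re) (hz1 : z.re < 1) (hy0 : 0 < z.im)
    (hy1 : z.im < 1) (hζ : ζ.im < 0) (hB : ζ ∉ vsB) :
    ‖((ζ - z)^2)⁻¹ - (ζ^2)⁻¹‖ ≤ 192 * (1 + ‖ζ‖) ^ (-(3:ℝ)) := by
  have r1 := (abs_le.1 (Complex.abs_re_le_norm ζ))
  have i1 := (abs_le.1 (Complex.abs_im_le_norm ζ))
  have r2 := (abs_le.1 (Complex.abs_re_le_norm (ζ - z)))
  have i2 := (abs_le.1 (Complex.abs_im_le_norm (ζ - z)))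
  simp only [Complex.sub_re, Complex.sub_im] at r2 i2
  have hz2 : ‖z‖ ≤ 2 := by
    have := Complex.norm_le_abs_re_add_abs_im z
    rw [abs_of_pos hz0, abs_of_pos hy0] at this
    linarith
  have hcase : ζ.re ≤ -1 ∨ 2 ≤ ζ.re ∨ ζ.im ≤ -1 := by
    by_contra hc
    push Not at hc
    exact hB ⟨hc.1, hc.2.1, hc.2.2, hζ⟩
  have ha : 1 ≤ ‖ζ‖ := by rcases hcase with h | h | h <;> linarith
  have hb : 1 ≤ ‖ζ - z‖ := by rcases hcase with h | h | h <;> linarith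
  have hab : ‖ζ‖ ≤ 3 * ‖ζ - z‖ := by
    have := norm_add_le (ζ - z) z
    rw [sub_add_cancel] at this
    linarith
  have n1 : ζ ≠ 0 := norm_pos_iff.1 (by linarith)
  have n2 : ζ - z ≠ 0 := norm_pos_iff.1 (by linarith)
  have e : ((ζ - z)^2)⁻¹ - (ζ^2)⁻¹ = z * (ζ⁻¹ * ((ζ - z)⁻¹)^2 + (ζ⁻¹)^2 * (ζ - z)⁻¹) := by
    field_simp
    ring
  rw [e, norm_mul]
  have hi : ‖ζ - z‖⁻¹ ≤ 3 * ‖ζ‖⁻¹ := by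
    rw [inv_le_comm₀ (by linarith) (by positivity), mul_inv, inv_inv]
    linarith
  have h3 : ‖ζ⁻¹ * ((ζ - z)⁻¹)^2 + (ζ⁻¹)^2 * (ζ - z)⁻¹‖ ≤ 12 * ‖ζ‖⁻¹ ^ 3 := by
    refine (norm_add_le _ _).trans ?_
    simp only [norm_mul, norm_pow, norm_inv]
    calc _ ≤ ‖ζ‖⁻¹ * (3 * ‖ζ‖⁻¹) ^ 2 + ‖ζ‖⁻¹ ^ 2 * (3 * ‖ζ‖⁻¹) := by gcongr
      _ = _ := by ring
  have h4 : ‖ζ‖⁻¹ ≤ 2 * (1 + ‖ζ‖)⁻¹ := by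
    rw [inv_le_comm₀ (by linarith) (by positivity), mul_inv, inv_inv]
    linarith
  have h5 : (1 + ‖ζ‖) ^ (-(3:ℝ)) = (1 + ‖ζ‖)⁻¹ ^ 3 := by
    rw [Real.rpow_neg (by positivity), inv_pow]
    congr 1
    exact_mod_cast Real.rpow_natCast (1 + ‖ζ‖) 3
  rw [h5]
  calc _ ≤ 2 * (12 * (2 * (1 + ‖ζ‖)⁻¹) ^ 3) := by
        gcongr
        refine h3.trans ?_
        gcongr
    _ = _ := by ring

lemma vs_far_int : Integrable (fun ζ : ℂ => 192 * (1 + ‖ζ‖) ^ (-(3:ℝ))) := by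
  apply Integrable.const_mul
  apply integrable_one_add_norm
  rw [Complex.finrank_real_complex]; norm_num

lemma vs_H_meas : MeasurableSet {ζ : ℂ | ζ.im < 0} :=
  (isOpen_lt Complex.continuous_im continuous_const).measurableSet

lemma vs_W_int_le (f : ℂ → ℂ) (z : ℂ) (s : Set ℂ) (hs : MeasurableSet s) (c : ℝ)
    (h : ∀ w ∈ s, ‖f w‖ ≤ c * vsN (w - z)) (hc : 0 ≤ c) :
    ‖∫ w in s, f w‖ ≤ c * ∫ u, vsN u := by
  have h1 : ‖∫ w in s, f w‖ ≤ ∫ w in s, c * vsN (w - z) := by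
    apply norm_integral_le_of_norm_le ((vs_N_shift_int z).const_mul c).integrableOn
    filter_upwards [ae_restrict_mem hs] with w hw using h w hw
  rw [integral_const_mul] at h1
  exact h1.trans (mul_le_mul_of_nonneg_left (vs_N_shift_le z s) hc)

lemma vs_main_H (ν : ℂ → ℂ) (hν : Measurable ν) (hν1 : ∀ w, ‖ν w‖ ≤ 1)
    (hW : IntegrableOn (fun ζ => ν ζ * (ζ ^ 2)⁻¹) (vsB \ vsG)) :
    ∃ C, ∀ y ∈ Ioo (0:ℝ) 1, ∀ x ∈ Ioo (0:ℝ) 1, ‖Ssharp ν ((x : ℂ) + (y : ℂ) * Complex.I) -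
      vsSG ν ((x : ℂ) + (y : ℂ) * Complex.I)‖ ≤ C * vsq x := by
  have hpi := Real.pi_pos
  set c0 := ‖-(1 / (Real.pi : ℂ))‖
  set c1 := ‖∫ ζ in vsG, ν ζ * (ζ ^ 2)⁻¹‖
  set c2 := ‖∫ ζ in vsB \ vsG, ν ζ * (ζ ^ 2)⁻¹‖
  set c3 := ∫ ζ in {ζ : ℂ | ζ.im < 0} \ vsB, 192 * (1 + ‖ζ‖) ^ (-(3:ℝ))
  set J := ∫ u, vsN u
  refine ⟨c0 * (c1 + (2 * J + c2) + c3), ?_⟩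
  intro y hy x hx
  set z : ℂ := (x : ℂ) + (y : ℂ) * Complex.I with hz
  have zre : z.re = x := by simp [hz]
  have zim : z.im = y := by simp [hz]
  have hBm := vs_meas_B
  have hGm := vs_meas_G
  have hGB : vsG ⊆ vsB := vs_G_sub_P.trans vs_P_sub_B
  have hBH : vsB ⊆ {ζ : ℂ | ζ.im < 0} := fun w hw => hw.2.2.2
  have hzim : 0 < z.im := by rw [zim]; exact hy.1
  have z0 : 0 < z.re := by rw [zre]; exact hx.1
  have z1 : z.re < 1 := by rw [zre]; exact hx.2
  have y1 : z.im < 1 := by rw [zim]; exact hy.2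
  have efun : (fun ζ => ν ζ * (((ζ - z)^2)⁻¹ - (ζ^2)⁻¹)) =
      fun ζ => ν ζ / (ζ - z) ^ 2 - ν ζ * (ζ ^ 2)⁻¹ := by
    ext ζ; rw [mul_sub, div_eq_mul_inv]
  have iG1 := vs_ker_int ν hν hν1 z hzim vsG hGm hGB
  have iW1 := vs_ker_int ν hν hν1 z hzim (vsB \ vsG) (hBm.diff hGm) sdiff_subset
  have iG2 : IntegrableOn (fun ζ => ν ζ * (ζ ^ 2)⁻¹) vsG := by
    refine Integrable.mono vs_G_int ?_ ?_
    · apply Measurable.aestronglyMeasurable; fun_prop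
    · filter_upwards with ζ
      rw [norm_mul, norm_inv, norm_pow, norm_inv, norm_pow, norm_norm]
      exact mul_le_of_le_one_left (by positivity) (hν1 ζ)
  have iG : IntegrableOn (fun ζ => ν ζ * (((ζ - z)^2)⁻¹ - (ζ^2)⁻¹)) vsG := by
    rw [efun]; exact iG1.sub iG2
  have iW : IntegrableOn (fun ζ => ν ζ * (((ζ - z)^2)⁻¹ - (ζ^2)⁻¹)) (vsB \ vsG) := by
    rw [efun]; exact iW1.sub hW
  have hfar : ∀ ζ ∈ {ζ : ℂ | ζ.im < 0} \ vsB, ‖ν ζ * (((ζ - z)^2)⁻¹ - (ζ^2)⁻¹)‖ ≤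
      192 * (1 + ‖ζ‖) ^ (-(3:ℝ)) := by
    intro ζ hζ
    rw [norm_mul]
    exact (mul_le_of_le_one_left (norm_nonneg _) (hν1 ζ)).trans
      (vs_far z0 z1 hzim y1 hζ.1 hζ.2)
  have iF : IntegrableOn (fun ζ => ν ζ * (((ζ - z)^2)⁻¹ - (ζ^2)⁻¹))
      ({ζ : ℂ | ζ.im < 0} \ vsB) := by
    refine Integrable.mono' vs_far_int.integrableOn ?_ ?_
    · apply Measurable.aestronglyMeasurable; fun_prop
    · filter_upwards [ae_restrict_mem (vs_H_meas.diff hBm)] with ζ hζ using hfar ζ hζ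
  have iB : IntegrableOn (fun ζ => ν ζ * (((ζ - z)^2)⁻¹ - (ζ^2)⁻¹)) vsB := by
    rw [← union_sdiff_cancel hGB]; exact iG.union iW
  have s1 : ∫ ζ in {ζ : ℂ | ζ.im < 0}, ν ζ * (((ζ - z)^2)⁻¹ - (ζ^2)⁻¹) =
      (∫ ζ in vsB, ν ζ * (((ζ - z)^2)⁻¹ - (ζ^2)⁻¹)) +
      ∫ ζ in {ζ : ℂ | ζ.im < 0} \ vsB, ν ζ * (((ζ - z)^2)⁻¹ - (ζ^2)⁻¹) := by
    conv_lhs => rw [← union_sdiff_cancel hBH]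
    exact setIntegral_union disjoint_sdiff_right (vs_H_meas.diff hBm) iB iF
  have s2 : ∫ ζ in vsB, ν ζ * (((ζ - z)^2)⁻¹ - (ζ^2)⁻¹) =
      (∫ ζ in vsG, ν ζ * (((ζ - z)^2)⁻¹ - (ζ^2)⁻¹)) +
      ∫ ζ in vsB \ vsG, ν ζ * (((ζ - z)^2)⁻¹ - (ζ^2)⁻¹) := by
    conv_lhs => rw [← union_sdiff_cancel hGB]
    exact setIntegral_union disjoint_sdiff_right (hBm.diff hGm) iG iW
  have s3 : ∫ ζ in vsG, ν ζ * (((ζ - z)^2)⁻¹ - (ζ^2)⁻¹) =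
      (∫ ζ in vsG, ν ζ / (ζ - z) ^ 2) - ∫ ζ in vsG, ν ζ * (ζ ^ 2)⁻¹ := by
    rw [efun]; exact integral_sub iG1 iG2
  have s4 : ∫ ζ in vsB \ vsG, ν ζ * (((ζ - z)^2)⁻¹ - (ζ^2)⁻¹) =
      (∫ ζ in vsB \ vsG, ν ζ / (ζ - z) ^ 2) - ∫ ζ in vsB \ vsG, ν ζ * (ζ ^ 2)⁻¹ := by
    rw [efun]; exact integral_sub iW1 hW
  have hq := vs_q_one x hx.1 hx.2
  have hJ : 0 ≤ J := integral_nonneg vs_N_nonneg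
  have b1 : ‖∫ ζ in vsB \ vsG, ν ζ / (ζ - z) ^ 2‖ ≤ 2 * vsq x * J := by
    apply vs_W_int_le _ z _ (hBm.diff hGm) _ _ (by positivity)
    intro w hw
    have := vs_W_bound hw z0 z1 hzim y1
    rw [zre] at this
    exact (vs_ker_norm ν hν1 w z).trans this
  have b2 : ‖∫ ζ in {ζ : ℂ | ζ.im < 0} \ vsB, ν ζ * (((ζ - z)^2)⁻¹ - (ζ^2)⁻¹)‖ ≤ c3 := by
    apply norm_integral_le_of_norm_le vs_far_int.integrableOn
    filter_upwards [ae_restrict_mem (vs_H_meas.diff hBm)] with ζ hζ using hfar ζ hζ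
  have hc3 : 0 ≤ c3 := (norm_nonneg _).trans b2
  unfold Ssharp vsSG
  rw [← mul_sub, norm_mul, s1, s2, s3, s4, mul_assoc]
  refine mul_le_mul_of_nonneg_left ?_ (norm_nonneg _)
  set A1 := ∫ ζ in vsG, ν ζ / (ζ - z) ^ 2
  set A2 := ∫ ζ in vsG, ν ζ * (ζ ^ 2)⁻¹
  set A3 := ∫ ζ in vsB \ vsG, ν ζ / (ζ - z) ^ 2
  set A4 := ∫ ζ in vsB \ vsG, ν ζ * (ζ ^ 2)⁻¹
  set A5 := ∫ ζ in {ζ : ℂ | ζ.im < 0} \ vsB, ν ζ * (((ζ - z)^2)⁻¹ - (ζ^2)⁻¹)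
  have e : A1 - A2 + (A3 - A4) + A5 - A1 = -A2 + (A3 - A4) + A5 := by ring
  rw [e]
  calc ‖-A2 + (A3 - A4) + A5‖ ≤ ‖-A2‖ + (‖A3‖ + ‖A4‖) + ‖A5‖ := by
        refine (norm_add_le _ _).trans ?_
        gcongr
        refine (norm_add_le _ _).trans ?_
        gcongr
        exact norm_sub_le _ _
    _ ≤ c1 + (2 * vsq x * J + c2) + c3 := by
        rw [norm_neg]
        gcongr
    _ ≤ _ := by
        have : 0 ≤ c1 := norm_nonneg _
        have : 0 ≤ c2 := norm_nonneg _
        nlinarith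

lemma vs_main_H_bad (ν : ℂ → ℂ) (hν : Measurable ν) (hν1 : ∀ w, ‖ν w‖ ≤ 1)
    (hW : ¬ IntegrableOn (fun ζ => ν ζ * (ζ ^ 2)⁻¹) (vsB \ vsG)) (z : ℂ) (hz : 0 < z.im) :
    Ssharp ν z = 0 := by
  unfold Ssharp
  rw [integral_undef, mul_zero]
  intro hi
  apply hW
  have hBH : vsB \ vsG ⊆ {ζ : ℂ | ζ.im < 0} := fun w hw => hw.1.2.2.2
  have h1 : IntegrableOn (fun ζ => ν ζ * (((ζ - z)^2)⁻¹ - (ζ^2)⁻¹)) (vsB \ vsG) :=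
    IntegrableOn.mono_set hi hBH
  have h2 := vs_ker_int ν hν hν1 z hz (vsB \ vsG) (vs_meas_B.diff vs_meas_G) sdiff_subset
  have h3 := h2.sub h1
  refine h3.congr ?_
  filter_upwards with ζ
  simp only [Pi.sub_apply]
  rw [div_eq_mul_inv]
  ring

lemma vs_sigma01_good (ν : ℂ → ℂ) (hν : Measurable ν) (hν1 : ∀ w, ‖ν w‖ ≤ 1)
    (hW : IntegrableOn (fun ζ => ν ζ * (ζ ^ 2)⁻¹) (vsB \ vsG)) :
    sigma01 (Ssharp ν) = sigma01 (vsSG ν) := by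
  obtain ⟨C, hC⟩ := vs_main_H ν hν hν1 hW
  exact vs_sigma_H _ _ C (vs_meas_Ssharp ν hν) (vs_SG_int ν hν hν1) hC

lemma vs_sigma01_bad (ν : ℂ → ℂ) (hν : Measurable ν) (hν1 : ∀ w, ‖ν w‖ ≤ 1)
    (hW : ¬ IntegrableOn (fun ζ => ν ζ * (ζ ^ 2)⁻¹) (vsB \ vsG)) :
    sigma01 (Ssharp ν) = sigma01 (vsSG 0) := by
  refine vs_sigma_H _ _ 0 (vs_meas_Ssharp ν hν) (vs_SG_int 0 measurable_const (by simp)) ?_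
  intro y hy x hx
  rw [vs_main_H_bad ν hν hν1 hW _ (by simpa using hy.1)]
  simp [vsSG]

lemma vs_φ_ne (w : ℂ) : vsφ w ≠ 0 := Complex.exp_ne_zero _

lemma vs_φ_norm (w : ℂ) : ‖vsφ w‖ = Real.exp (2 * Real.pi * w.im) := by
  unfold vsφ
  rw [Complex.norm_exp]
  congr 1
  simp

lemma vs_φ_meas : Measurable vsφ := by unfold vsφ; fun_prop

noncomputable def vsu (w : ℂ) : ℂ := -(starRingEnd ℂ (vsφ w)) / vsφ w

lemma vs_u_norm (w : ℂ) : ‖vsu w‖ = 1 := by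
  unfold vsu
  rw [norm_div, norm_neg, Complex.norm_conj, div_self (norm_ne_zero_iff.2 (vs_φ_ne w))]

lemma vs_u_meas : Measurable vsu := by
  have := vs_φ_meas
  unfold vsu
  have h : Measurable (fun w => starRingEnd ℂ (vsφ w)) :=
    Complex.continuous_conj.measurable.comp this
  fun_prop

noncomputable def vst (μ : ℂ → ℂ) (w : ℂ) : ℂ := μ (vsφ w) * vsu w

lemma vs_t_meas (μ : ℂ → ℂ) (hμ : Measurable μ) : Measurable (vst μ) := by
  have := vs_φ_meas
  have := vs_u_meas
  unfold vst
  fun_prop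

lemma vs_t_norm (μ : ℂ → ℂ) (hμ : ∀ w, ‖μ w‖ ≤ 1) (w : ℂ) : ‖vst μ w‖ ≤ 1 := by
  unfold vst
  rw [norm_mul, vs_u_norm, mul_one]
  exact hμ _

noncomputable def vsψ (ζ : ℂ) : ℂ := Complex.I / (2 * Real.pi) * Complex.log (-ζ) + 1 / 2

lemma vs_ψ_meas : Measurable vsψ := by
  unfold vsψ
  have : Measurable (fun ζ : ℂ => Complex.log (-ζ)) := Complex.measurable_log.comp measurable_neg
  fun_prop

lemma vs_ψ_re (ζ : ℂ) : (vsψ ζ).re = 1 / 2 - Complex.arg (-ζ) / (2 * Real.pi) := by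
  have h : vsψ ζ = ((1 / (2 * Real.pi) : ℝ) : ℂ) * (Complex.I * Complex.log (-ζ)) + (1/2 : ℝ) := by
    unfold vsψ; push_cast; ring
  rw [h, Complex.add_re, Complex.re_ofReal_mul, Complex.I_mul_re, Complex.log_im, Complex.ofReal_re]
  ring

lemma vs_ψ_im (ζ : ℂ) : (vsψ ζ).im = Real.log ‖ζ‖ / (2 * Real.pi) := by
  have h : vsψ ζ = ((1 / (2 * Real.pi) : ℝ) : ℂ) * (Complex.I * Complex.log (-ζ)) + (1/2 : ℝ) := by
    unfold vsψ; push_cast; ring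
  rw [h, Complex.add_im, Complex.im_ofReal_mul, Complex.I_mul_im, Complex.log_re, Complex.ofReal_im,
    norm_neg]
  ring

lemma vs_φψ (ζ : ℂ) (h : ζ ≠ 0) : vsφ (vsψ ζ) = ζ := by
  have hpi : (Real.pi : ℂ) ≠ 0 := by exact_mod_cast Real.pi_ne_zero
  unfold vsφ vsψ
  have e : -(2 * Real.pi * Complex.I) * (Complex.I / (2 * Real.pi) * Complex.log (-ζ) + 1 / 2) =
      Complex.log (-ζ) + -(Real.pi * Complex.I) := by
    field_simp
    ring_nf
    rw [Complex.I_sq]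
    ring
  rw [e, Complex.exp_add, Complex.exp_log (neg_ne_zero.2 h), Complex.exp_neg, Complex.exp_pi_mul_I]
  norm_num

lemma vs_ψφ (w : ℂ) (hw : w ∈ vsP) : vsψ (vsφ w) = w := by
  have hpi : (Real.pi : ℂ) ≠ 0 := by exact_mod_cast Real.pi_ne_zero
  have hpi0 := Real.pi_pos
  obtain ⟨h1, h2, -, -⟩ := hw
  have e : -vsφ w = Complex.exp (-(2 * Real.pi * Complex.I) * w + Real.pi * Complex.I) := by
    unfold vsφ
    rw [Complex.exp_add, Complex.exp_pi_mul_I]; ring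
  have eim : (-(2 * Real.pi * Complex.I) * w + Real.pi * Complex.I).im =
      Real.pi - 2 * Real.pi * w.re := by
    simp; ring
  unfold vsψ
  rw [e, Complex.log_exp]
  · field_simp
    ring_nf
    rw [Complex.I_sq]
    ring
  · rw [eim]; nlinarith
  · rw [eim]; nlinarith

lemma vs_φ_inj : InjOn vsφ vsP := fun a ha b hb hab => by
  rw [← vs_ψφ a ha, ← vs_ψφ b hb, hab]

lemma vs_ψ_mem (ζ : ℂ) (h0 : ζ.im ≠ 0) (h1 : ‖ζ‖ < 1) (h2 : Real.exp (-(2 * Real.pi)) < ‖ζ‖) :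
    vsψ ζ ∈ vsP := by
  have hpi0 := Real.pi_pos
  have hz : 0 < ‖ζ‖ := (Real.exp_pos _).trans h2
  have ha1 := Complex.neg_pi_lt_arg (-ζ)
  have ha2 : Complex.arg (-ζ) < Real.pi := by
    refine lt_of_le_of_ne (Complex.arg_le_pi _) ?_
    intro h
    rw [Complex.arg_eq_pi_iff] at h
    apply h0
    simpa using h.2
  refine ⟨?_, ?_, ?_, ?_⟩
  · rw [vs_ψ_re, sub_pos, div_lt_iff₀ (by positivity)]; linarith
  · rw [vs_ψ_re]
    have : -(1/2) < Complex.arg (-ζ) / (2 * Real.pi) := by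
      rw [lt_div_iff₀ (by positivity)]; linarith
    linarith
  · rw [vs_ψ_im, lt_div_iff₀ (by positivity)]
    have := (Real.lt_log_iff_exp_lt hz).2 h2
    linarith
  · rw [vs_ψ_im]
    have := Real.log_neg hz h1
    exact div_neg_of_neg_of_pos this (by positivity)

lemma vs_φ_deriv (w : ℂ) : HasDerivAt vsφ (-(2 * Real.pi * Complex.I) * vsφ w) w := by
  have h1 : HasDerivAt (fun w : ℂ => -(2 * Real.pi * Complex.I) * w) (-(2 * Real.pi * Complex.I)) w := by
    simpa using (hasDerivAt_id w).const_mul (-(2 * Real.pi * Complex.I))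
  have := h1.cexp
  unfold vsφ
  exact this.congr_deriv (mul_comm _ _)

lemma vs_det (a : ℂ) : ((ContinuousLinearMap.toSpanSingleton ℂ a).restrictScalars ℝ).det =
    ‖a‖ ^ 2 := by
  rw [Complex.sq_norm, ← Algebra.norm_complex_apply, Algebra.norm_apply]
  unfold ContinuousLinearMap.det
  congr 1
  ext x <;> simp [mul_comm]

lemma vs_cov (f : ℂ → ℂ) : ∫ ζ in vsφ '' vsP, f ζ =
    ∫ w in vsP, ((‖-(2 * Real.pi * Complex.I) * vsφ w‖ ^ 2 : ℝ) : ℂ) * f (vsφ w) := by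
  rw [integral_image_eq_integral_abs_det_fderiv_smul volume vs_open_P.measurableSet
    (fun w _ => ((vs_φ_deriv w).hasFDerivAt.restrictScalars ℝ).hasFDerivWithinAt) vs_φ_inj]
  congr 1
  ext w
  rw [vs_det, abs_of_nonneg (by positivity), Complex.real_smul]

lemma vs_integrand (μ : ℂ → ℂ) (w z : ℂ) (h : vsφ w ≠ vsφ z) :
    ((‖-(2 * Real.pi * Complex.I) * vsφ w‖ ^ 2 : ℝ) : ℂ) * (μ (vsφ w) / (vsφ w - vsφ z) ^ 2) =
      vst μ w * vsm (w - z) ^ 2 := by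
  have e : Complex.exp (2 * Real.pi * Complex.I * (w - z)) = vsφ z / vsφ w := by
    unfold vsφ
    rw [← Complex.exp_sub]; congr 1; ring
  have hn : ((‖-(2 * Real.pi * Complex.I) * vsφ w‖ ^ 2 : ℝ) : ℂ) =
      4 * Real.pi ^ 2 * (vsφ w * starRingEnd ℂ (vsφ w)) := by
    rw [norm_mul, mul_pow, Complex.mul_conj, Complex.normSq_eq_norm_sq]
    have : ‖-(2 * Real.pi * Complex.I : ℂ)‖ = 2 * Real.pi := by
      simp [abs_of_pos Real.pi_pos]
    rw [this]
    push_cast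
    ring
  have hw := vs_φ_ne w
  have hd : vsφ w - vsφ z ≠ 0 := sub_ne_zero.2 h
  rw [hn]
  unfold vst vsu vsm
  rw [e]
  have : 1 - vsφ z / vsφ w = (vsφ w - vsφ z) / vsφ w := by field_simp
  rw [this]
  field_simp
  rw [Complex.I_sq]
  ring

lemma vs_M_bound (z : ℂ) (f : ℂ → ℂ) (s : Set ℂ) (hs : MeasurableSet s) (c : ℝ) (hc : 0 ≤ c)
    (h : ∀ w ∈ s, ‖f w‖ ≤ c * (vsN (w - z) + vsN (w - (z + 1)) + vsN (w - (z - 1)))) :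
    ‖∫ w in s, f w‖ ≤ c * (3 * ∫ u, vsN u) := by
  have i1 := vs_N_shift_int z
  have i2 := vs_N_shift_int (z + 1)
  have i3 := vs_N_shift_int (z - 1)
  have h1 : ‖∫ w in s, f w‖ ≤
      ∫ w in s, c * (vsN (w - z) + vsN (w - (z + 1)) + vsN (w - (z - 1))) := by
    apply norm_integral_le_of_norm_le (((i1.add i2).add i3).const_mul c).integrableOn
    filter_upwards [ae_restrict_mem hs] with w hw using h w hw
  rw [integral_const_mul] at h1
  refine h1.trans (mul_le_mul_of_nonneg_left ?_ hc)
  have e1 : ∫ w in s, (vsN (w - z) + vsN (w - (z + 1)) + vsN (w - (z - 1))) =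
      (∫ w in s, vsN (w - z)) + (∫ w in s, vsN (w - (z + 1))) + ∫ w in s, vsN (w - (z - 1)) := by
    have i12 : IntegrableOn (fun w => vsN (w - z) + vsN (w - (z + 1))) s :=
      (i1.add i2).integrableOn
    rw [integral_add i12 i3.integrableOn,
      integral_add i1.integrableOn i2.integrableOn]
  rw [e1]
  have := vs_N_shift_le z s
  have := vs_N_shift_le (z + 1) s
  have := vs_N_shift_le (z - 1) s
  linarith

lemma vs_shift_bound {w z : ℂ} (hw : w ∈ vsP) (z0 : 0 < z.re) (z1 : z.re < 1) (y0 : 0 < z.im)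
    (y1 : z.im < 1) : (‖w - z - 1‖ ^ 2)⁻¹ ≤ 2 * vsq z.re * vsN (w - (z + 1)) ∧
      (‖w - z + 1‖ ^ 2)⁻¹ ≤ 2 * vsq z.re * vsN (w - (z - 1)) := by
  obtain ⟨h1, h2, h3, h4⟩ := hw
  constructor
  · have := vs_W_bound (w := w - 1) (z := z) ⟨⟨by simp; linarith, by simp; linarith, by simpa using h3,
      by simpa using h4⟩, fun h => by have := h.1; simp at this; linarith⟩ z0 z1 y0 y1
    rw [show w - 1 - z = w - (z + 1) by ring] at this
    rwa [show w - z - 1 = w - (z + 1) by ring]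
  · have := vs_W_bound (w := w + 1) (z := z) ⟨⟨by simp; linarith, by simp; linarith, by simpa using h3,
      by simpa using h4⟩, fun h => by have := h.2.1; simp at this; linarith⟩ z0 z1 y0 y1
    rw [show w + 1 - z = w - (z - 1) by ring] at this
    rwa [show w - z + 1 = w - (z - 1) by ring]

lemma vs_main_D (μ : ℂ → ℂ) (hμ : Measurable μ) (hμ1 : ∀ w, ‖μ w‖ ≤ 1) :
    ∃ C, ∀ y ∈ Ioo (0:ℝ) 1, ∀ x ∈ Ioo (0:ℝ) 1,
      ‖Sdisk μ (vsφ ((x : ℂ) + (y : ℂ) * Complex.I)) -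
      vsSG (vst μ) ((x : ℂ) + (y : ℂ) * Complex.I)‖ ≤ C * vsq x := by
  have hpi := Real.pi_pos
  obtain ⟨C, hC3, hC⟩ := vs_k_diff
  set c0 := ‖-(1 / (Real.pi : ℂ))‖
  set J := ∫ u, vsN u
  set V := volume.real (Metric.ball (0:ℂ) 1 \ vsφ '' vsP)
  refine ⟨c0 * (C * 6 * (3 * J) + 3 * 6 * (3 * J) + 4 * V), ?_⟩
  intro y hy x hx
  set z : ℂ := (x : ℂ) + (y : ℂ) * Complex.I with hz
  have zre : z.re = x := by simp [hz]
  have zim : z.im = y := by simp [hz]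
  have y0 : 0 < z.im := by rw [zim]; exact hy.1
  have z0 : 0 < z.re := by rw [zre]; exact hx.1
  have z1 : z.re < 1 := by rw [zre]; exact hx.2
  have y1 : z.im < 1 := by rw [zim]; exact hy.2
  have hGm := vs_meas_G
  have hPm := vs_open_P.measurableSet
  have hGP := vs_G_sub_P
  have hq := vs_q_one x hx.1 hx.2
  have hJ : 0 ≤ J := integral_nonneg vs_N_nonneg
  have hV : 0 ≤ V := measureReal_nonneg
  have htm := vs_t_meas μ hμ
  have ht1 := vs_t_norm μ hμ1
  have hφz : 1 < ‖vsφ z‖ := by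
    rw [vs_φ_norm]
    have : 0 < 2 * Real.pi * z.im := by positivity
    simpa using this
  have hDm : MeasurableSet (Metric.ball (0:ℂ) 1) := measurableSet_ball
  have hIm : MeasurableSet (vsφ '' vsP) :=
    hPm.image_of_measurable_injOn vs_φ_meas vs_φ_inj
  have hID : vsφ '' vsP ⊆ Metric.ball (0:ℂ) 1 := by
    rintro _ ⟨w, hw, rfl⟩
    rw [mem_ball_zero_iff, vs_φ_norm]
    have := hw.2.2.2
    have : 2 * Real.pi * w.im < 0 := mul_neg_of_pos_of_neg (by positivity) this
    simpa using this
  have iD : IntegrableOn (fun ζ => μ ζ / (ζ - vsφ z) ^ 2) (Metric.ball (0:ℂ) 1) := by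
    refine Measure.integrableOn_of_bounded (M := ((‖vsφ z‖ - 1) ^ 2)⁻¹)
      measure_ball_lt_top.ne ?_ ?_
    · apply Measurable.aestronglyMeasurable; fun_prop
    · filter_upwards [ae_restrict_mem hDm] with ζ hζ
      rw [mem_ball_zero_iff] at hζ
      refine (vs_ker_norm μ hμ1 ζ _).trans ?_
      have h1 := norm_sub_norm_le (vsφ z) ζ
      rw [norm_sub_rev] at h1
      have h2 : 0 < ‖vsφ z‖ - 1 := by linarith
      have h3 : ‖vsφ z‖ - 1 ≤ ‖ζ - vsφ z‖ := by linarith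
      gcongr
  have s1 : ∫ ζ in Metric.ball (0:ℂ) 1, μ ζ / (ζ - vsφ z) ^ 2 =
      (∫ ζ in vsφ '' vsP, μ ζ / (ζ - vsφ z) ^ 2) +
      ∫ ζ in Metric.ball (0:ℂ) 1 \ vsφ '' vsP, μ ζ / (ζ - vsφ z) ^ 2 := by
    conv_lhs => rw [← union_sdiff_cancel hID]
    exact setIntegral_union disjoint_sdiff_right (hDm.diff hIm) (iD.mono_set hID)
      (iD.mono_set sdiff_subset)
  have b3 : ‖∫ ζ in Metric.ball (0:ℂ) 1 \ vsφ '' vsP, μ ζ / (ζ - vsφ z) ^ 2‖ ≤ 4 * V := by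
    apply norm_setIntegral_le_of_norm_le_const_ae'
      ((measure_mono sdiff_subset).trans_lt measure_ball_lt_top)
    filter_upwards [vs_ae_im] with ζ him hζ
    have hle : ‖ζ‖ ≤ 1/2 := by
      by_contra hcon
      push Not at hcon
      apply hζ.2
      have hζ1 := hζ.1
      rw [mem_ball_zero_iff] at hζ1
      have hex : Real.exp (-(2 * Real.pi)) ≤ 1/2 := by
        rw [Real.exp_neg, one_div]
        apply inv_anti₀ (by norm_num)
        have := Real.add_one_le_exp (2 * Real.pi)
        linarith [Real.pi_gt_three]
      refine ⟨vsψ ζ, vs_ψ_mem ζ him hζ1 (by linarith), vs_φψ ζ ?_⟩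
      exact norm_pos_iff.1 (by linarith)
    refine (vs_ker_norm μ hμ1 ζ _).trans ?_
    have h1 := norm_sub_norm_le (vsφ z) ζ
    rw [norm_sub_rev] at h1
    have h3 : 1/2 ≤ ‖ζ - vsφ z‖ := by linarith
    calc (‖ζ - vsφ z‖ ^ 2)⁻¹ ≤ ((1/2 : ℝ) ^ 2)⁻¹ := by gcongr
      _ = 4 := by norm_num
  have s2 : ∫ ζ in vsφ '' vsP, μ ζ / (ζ - vsφ z) ^ 2 =
      ∫ w in vsP, vst μ w * vsm (w - z) ^ 2 := by
    rw [vs_cov]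
    apply setIntegral_congr_fun hPm
    intro w hw
    apply vs_integrand
    intro heq
    have h1 := hID ⟨w, hw, rfl⟩
    rw [mem_ball_zero_iff, heq] at h1
    linarith
  have hu : ∀ w ∈ vsP, |(w - z).re| < 1 ∧ (w - z).im < 0 ∧ -2 < (w - z).im := by
    rintro w ⟨h1, h2, h3, h4⟩
    simp only [Complex.sub_re, Complex.sub_im]
    exact ⟨abs_lt.2 ⟨by linarith, by linarith⟩, by linarith, by linarith⟩
  have hmm : Measurable (fun w => vst μ w * vsm (w - z) ^ 2) := by
    unfold vsm; fun_prop
  have iP : IntegrableOn (fun w => vst μ w * vsm (w - z) ^ 2) vsP := by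
    refine Measure.integrableOn_of_bounded (M := 9 * (z.im ^ 2)⁻¹)
      ((measure_mono vs_P_sub_B).trans_lt vs_B_bdd).ne hmm.aestronglyMeasurable ?_
    filter_upwards [ae_restrict_mem hPm] with w hw
    obtain ⟨u1, u2, u3⟩ := hu w hw
    have h1 := vs_m_sq (w - z) u1 u2
    have k1 := vs_ker_le (w := w) (z := z) hw.2.2.2 y0
    have k2 := vs_ker_le (w := w - 1) (z := z) (by simpa using hw.2.2.2) y0
    have k3 := vs_ker_le (w := w + 1) (z := z) (by simpa using hw.2.2.2) y0
    rw [sub_right_comm] at k2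
    rw [show w + 1 - z = w - z + 1 by ring] at k3
    rw [norm_mul, norm_pow]
    refine (mul_le_of_le_one_left (by positivity) (ht1 w)).trans ?_
    linarith
  have s3 : ∫ w in vsP, vst μ w * vsm (w - z) ^ 2 =
      (∫ w in vsG, vst μ w * vsm (w - z) ^ 2) + ∫ w in vsP \ vsG, vst μ w * vsm (w - z) ^ 2 := by
    conv_lhs => rw [← union_sdiff_cancel hGP]
    exact setIntegral_union disjoint_sdiff_right (hPm.diff hGm) (iP.mono_set hGP)
      (iP.mono_set sdiff_subset)
  have iG1 := vs_ker_int (vst μ) htm ht1 z y0 vsG hGm (hGP.trans vs_P_sub_B)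
  have s4 : (∫ w in vsG, vst μ w * vsm (w - z) ^ 2) - (∫ w in vsG, vst μ w / (w - z) ^ 2) =
      ∫ w in vsG, (vst μ w * vsm (w - z) ^ 2 - vst μ w / (w - z) ^ 2) :=
    (integral_sub (iP.mono_set hGP) iG1).symm
  have b1 : ‖∫ w in vsG, (vst μ w * vsm (w - z) ^ 2 - vst μ w / (w - z) ^ 2)‖ ≤
      (C * (6 * vsq x)) * (3 * J) := by
    apply vs_M_bound z _ _ hGm _ (by positivity)
    intro w hw
    obtain ⟨u1, u2, u3⟩ := hu w (hGP hw)
    have h1 := hC (w - z) u1 u2 u3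
    obtain ⟨k2, k3⟩ := vs_shift_bound (hGP hw) z0 z1 y0 y1
    have k1 := vs_one_bound (vs_P_sub_B (hGP hw)) z0 z1 y0 y1
    rw [zre] at k1 k2 k3
    have e : vst μ w * vsm (w - z) ^ 2 - vst μ w / (w - z) ^ 2 =
        vst μ w * (vsm (w - z) ^ 2 - 1 / (w - z) ^ 2) := by ring
    rw [e, norm_mul]
    refine (mul_le_of_le_one_left (by positivity) (ht1 w)).trans (h1.trans ?_)
    rw [mul_assoc]
    refine mul_le_mul_of_nonneg_left ?_ (by linarith)
    have n2 := mul_nonneg (by linarith : 0 ≤ vsq x) (vs_N_nonneg (w - (z + 1)))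
    have n3 := mul_nonneg (by linarith : 0 ≤ vsq x) (vs_N_nonneg (w - (z - 1)))
    linarith
  have b2 : ‖∫ w in vsP \ vsG, vst μ w * vsm (w - z) ^ 2‖ ≤ (3 * (6 * vsq x)) * (3 * J) := by
    apply vs_M_bound z _ _ (hPm.diff hGm) _ (by positivity)
    intro w hw
    obtain ⟨u1, u2, u3⟩ := hu w hw.1
    have h1 := vs_m_sq (w - z) u1 u2
    obtain ⟨k2, k3⟩ := vs_shift_bound hw.1 z0 z1 y0 y1
    have k1 := vs_W_bound ⟨vs_P_sub_B hw.1, hw.2⟩ z0 z1 y0 y1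
    rw [zre] at k1 k2 k3
    rw [norm_mul, norm_pow]
    refine (mul_le_of_le_one_left (by positivity) (ht1 w)).trans (h1.trans ?_)
    rw [mul_assoc]
    refine mul_le_mul_of_nonneg_left ?_ (by norm_num)
    have n1 := mul_nonneg (by linarith : 0 ≤ vsq x) (vs_N_nonneg (w - z))
    have n2 := mul_nonneg (by linarith : 0 ≤ vsq x) (vs_N_nonneg (w - (z + 1)))
    have n3 := mul_nonneg (by linarith : 0 ≤ vsq x) (vs_N_nonneg (w - (z - 1)))
    linarith
  unfold Sdisk vsSG
  rw [← mul_sub, norm_mul, s1, s2, s3, mul_assoc]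
  refine mul_le_mul_of_nonneg_left ?_ (norm_nonneg _)
  rw [← s4] at b1
  set A1 := ∫ w in vsG, vst μ w * vsm (w - z) ^ 2
  set A2 := ∫ w in vsG, vst μ w / (w - z) ^ 2
  set A3 := ∫ w in vsP \ vsG, vst μ w * vsm (w - z) ^ 2
  set A4 := ∫ ζ in Metric.ball (0:ℂ) 1 \ vsφ '' vsP, μ ζ / (ζ - vsφ z) ^ 2
  have e : A1 + A3 + A4 - A2 = (A1 - A2) + A3 + A4 := by ring
  rw [e]
  have t1 := norm_add_le ((A1 - A2) + A3) A4
  have t2 := norm_add_le (A1 - A2) A3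
  nlinarith

lemma vs_sigma_disk (μ : ℂ → ℂ) (hμ : Measurable μ) (hμ1 : ∀ w, ‖μ w‖ ≤ 1) :
    sigmaDisk (Sdisk μ) = sigma01 (vsSG (vst μ)) := by
  obtain ⟨C, hC⟩ := vs_main_D μ hμ hμ1
  exact vs_sigma_D _ _ C (vs_meas_Sdisk μ hμ)
    (vs_SG_int _ (vs_t_meas μ hμ) (vs_t_norm μ hμ1)) hC

lemma vs_SG_congr (ν ν' : ℂ → ℂ) (h : ∀ w ∈ vsG, ν w = ν' w) : vsSG ν = vsSG ν' := by
  ext z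
  unfold vsSG
  congr 1
  apply setIntegral_congr_fun vs_meas_G
  intro w hw
  simp only [h w hw]

/-- Modify a function bounded by one almost everywhere so that it is bounded everywhere. -/
lemma vs_fix (μ : ℂ → ℂ) (hμ : Measurable μ) (h1 : ∀ᵐ ζ : ℂ, ‖μ ζ‖ ≤ 1) :
    ∃ μ' : ℂ → ℂ, Measurable μ' ∧ (∀ ζ, ‖μ' ζ‖ ≤ 1) ∧ (μ =ᵐ[volume] μ') := by
  refine ⟨{ζ | ‖μ ζ‖ ≤ 1}.indicator μ, hμ.indicator (measurableSet_le hμ.norm measurable_const),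
    ?_, ?_⟩
  · intro ζ
    by_cases h : ζ ∈ {ζ | ‖μ ζ‖ ≤ 1}
    · rw [indicator_of_mem h]; exact h
    · rw [indicator_of_notMem h]; simp
  · filter_upwards [h1] with ζ h
    rw [indicator_of_mem (show ζ ∈ {ζ | ‖μ ζ‖ ≤ 1} from h)]

/-- Transplantation from the region `vsG` to the disk. -/
noncomputable def vsback (ν : ℂ → ℂ) (ζ : ℂ) : ℂ :=
  vsG.indicator (fun w => ν w * (vsu w)⁻¹) (vsψ ζ)

lemma vs_back_meas (ν : ℂ → ℂ) (hν : Measurable ν) : Measurable (vsback ν) := by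
  have := vs_u_meas
  have h : Measurable (vsG.indicator (fun w => ν w * (vsu w)⁻¹)) :=
    Measurable.indicator (by fun_prop) vs_meas_G
  exact h.comp vs_ψ_meas

lemma vs_back_norm (ν : ℂ → ℂ) (hν1 : ∀ w, ‖ν w‖ ≤ 1) (ζ : ℂ) : ‖vsback ν ζ‖ ≤ 1 := by
  unfold vsback
  by_cases h : vsψ ζ ∈ vsG
  · rw [indicator_of_mem h, norm_mul, norm_inv, vs_u_norm, inv_one, mul_one]
    exact hν1 _
  · rw [indicator_of_notMem h]; simp

lemma vs_back_supp (ν : ℂ → ℂ) (ζ : ℂ) (h : ζ ∉ Metric.ball (0:ℂ) 1) : vsback ν ζ = 0 := by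
  apply indicator_of_notMem
  intro hG
  apply h
  have h3 := hG.2.2.1
  rw [vs_ψ_im] at h3
  rw [mem_ball_zero_iff]
  by_contra hc
  push Not at hc
  have := Real.log_nonneg hc
  have hpi := Real.pi_pos
  have : 0 ≤ Real.log ‖ζ‖ / (2 * Real.pi) := by positivity
  linarith

lemma vs_t_back (ν : ℂ → ℂ) (w : ℂ) (hw : w ∈ vsG) : vst (vsback ν) w = ν w := by
  unfold vst vsback
  rw [vs_ψφ w (vs_G_sub_P hw), indicator_of_mem hw]
  have : vsu w ≠ 0 := norm_ne_zero_iff.1 (by rw [vs_u_norm]; exact one_ne_zero)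
  field_simp

theorem stmt3 :
    sSup {v : ℝ | ∃ μ : ℂ → ℂ, Measurable μ ∧ (∀ᵐ ζ : ℂ, ‖μ ζ‖ ≤ 1) ∧
        (∀ ζ : ℂ, ζ ∉ Metric.ball (0:ℂ) 1 → μ ζ = 0) ∧ v = sigmaDisk (Sdisk μ)} =
      SigmaSqH := by
  unfold SigmaSqH
  congr 1
  ext v
  constructor
  · rintro ⟨μ, hμ, hμ1, -, rfl⟩
    obtain ⟨μ', hm, hn, hae⟩ := vs_fix μ hμ hμ1
    have e : Sdisk μ = Sdisk μ' := by
      ext z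
      unfold Sdisk
      congr 1
      apply integral_congr_ae
      filter_upwards [ae_restrict_of_ae hae] with ζ h
      rw [h]
    rw [e, vs_sigma_disk μ' hm hn]
    have hn' : ∀ ζ, ‖vsG.indicator (vst μ') ζ‖ ≤ 1 := fun ζ =>
      (norm_indicator_le_norm_self _ _).trans (vs_t_norm μ' hn ζ)
    have hm' : Measurable (vsG.indicator (vst μ')) := (vs_t_meas μ' hm).indicator vs_meas_G
    refine ⟨vsG.indicator (vst μ'), hm', Eventually.of_forall hn', ?_, ?_⟩
    · intro ζ hζ
      exact indicator_of_notMem (fun h => absurd h.2.2.1 (not_lt.2 hζ)) _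
    · rw [vs_sigma01_good _ hm' hn']
      · rw [vs_SG_congr (vst μ') (vsG.indicator (vst μ')) fun w hw => (indicator_of_mem hw _).symm]
      · have h0 : IntegrableOn (fun _ : ℂ => (0:ℂ)) (vsB \ vsG) := integrableOn_zero
        apply IntegrableOn.congr_fun h0 ?_ (vs_meas_B.diff vs_meas_G)
        intro w hw
        simp [indicator_of_notMem hw.2]
  · rintro ⟨ν, hν, hν1, -, rfl⟩
    obtain ⟨ν', hm, hn, hae⟩ := vs_fix ν hν hν1
    have e : Ssharp ν = Ssharp ν' := by
      ext z
      unfold Ssharp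
      congr 1
      apply integral_congr_ae
      filter_upwards [ae_restrict_of_ae hae] with ζ h
      rw [h]
    rw [e]
    have main : ∀ η : ℂ → ℂ, Measurable η → (∀ w, ‖η w‖ ≤ 1) →
        ∃ μ : ℂ → ℂ, Measurable μ ∧ (∀ᵐ ζ : ℂ, ‖μ ζ‖ ≤ 1) ∧
        (∀ ζ : ℂ, ζ ∉ Metric.ball (0:ℂ) 1 → μ ζ = 0) ∧
        sigma01 (vsSG η) = sigmaDisk (Sdisk μ) := by
      intro η h1 h2
      refine ⟨vsback η, vs_back_meas η h1, Eventually.of_forall (vs_back_norm η h2),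
        vs_back_supp η, ?_⟩
      rw [vs_sigma_disk _ (vs_back_meas η h1) (vs_back_norm η h2),
        vs_SG_congr _ η (vs_t_back η)]
    by_cases hW : IntegrableOn (fun ζ => ν' ζ * (ζ ^ 2)⁻¹) (vsB \ vsG)
    · rw [vs_sigma01_good ν' hm hn hW]
      exact main ν' hm hn
    · rw [vs_sigma01_bad ν' hm hn hW]
      exact main 0 measurable_const (by simp)
end

section
/- There exists an absolute constant C > 0 with the following property. Let μ : ℂ → ℂ be measurable, vanishing outside the lower half-plane {ζ : Im ζ < 0}, with |μ| ≤ 1 a.e. Let x ∈ ℝ, y > 0, L > 0, and suppose μ = 0 a.e. on the set Q_L(x−iy) := {w : Re w ∈ [x − e^L y, x + e^L y], Im w ∈ [−e^L y, −e^{−L} y]}. Then 2y·|Tμ(x+iy)| ≤ C·e^{−L}. -/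
open Complex MeasureTheory Filter Topology Set

lemma aux_far (z : ℂ) (R : ℝ) (hR : 0 < R) :
    Integrable (fun ζ : ℂ => 8 * (R⁻¹)^3 * (1 + ‖R⁻¹ • (ζ - z)‖) ^ (-3 : ℝ)) ∧
    ∫ ζ : ℂ, 8 * (R⁻¹)^3 * (1 + ‖R⁻¹ • (ζ - z)‖) ^ (-3 : ℝ)
      = 8 * R⁻¹ * ∫ ζ : ℂ, (1 + ‖ζ‖) ^ (-3 : ℝ) := by
  have h0 : Integrable (fun ζ : ℂ => (1 + ‖ζ‖) ^ (-3 : ℝ)) :=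
    integrable_one_add_norm (by rw [Complex.finrank_real_complex]; norm_num)
  have h1 : Integrable (fun ζ : ℂ => (1 + ‖R⁻¹ • ζ‖) ^ (-3 : ℝ)) :=
    h0.comp_smul (inv_ne_zero hR.ne')
  refine ⟨(h1.comp_sub_right z).const_mul _, ?_⟩
  rw [integral_const_mul,
    integral_sub_right_eq_self (fun ζ : ℂ => (1 + ‖R⁻¹ • ζ‖) ^ (-3 : ℝ)) z,
    Measure.integral_comp_inv_smul volume (fun ζ : ℂ => (1 + ‖ζ‖) ^ (-3 : ℝ)),
    Complex.finrank_real_complex, abs_of_pos (by positivity), smul_eq_mul]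
  field_simp

lemma aux_strip (x y a : ℝ) (hy : 0 < y) (ha : 0 < a) :
    Integrable (fun ζ : ℂ => (y⁻¹)^3 * (1 + ((ζ.re - x) / y)^2)⁻¹ *
      (Icc (-a) 0).indicator (fun _ => (1:ℝ)) ζ.im) ∧
    ∫ ζ : ℂ, (y⁻¹)^3 * (1 + ((ζ.re - x) / y)^2)⁻¹ *
      (Icc (-a) 0).indicator (fun _ => (1:ℝ)) ζ.im = (y⁻¹)^2 * Real.pi * a := by
  have h1 : Integrable (fun t : ℝ => (1 + (t / y)^2)⁻¹) :=
    integrable_inv_one_add_sq.comp_div hy.ne'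
  have h2 : Integrable (fun t : ℝ => (y⁻¹)^3 * (1 + ((t - x) / y)^2)⁻¹) :=
    (h1.comp_sub_right x).const_mul _
  have h3 : Integrable (fun t : ℝ => (Icc (-a) 0).indicator (fun _ => (1:ℝ)) t) :=
    (integrable_indicator_iff measurableSet_Icc).2 (by simp)
  have h4 := h2.mul_prod h3
  constructor
  · exact (Complex.volume_preserving_equiv_real_prod.integrable_comp_emb
      Complex.measurableEquivRealProd.measurableEmbedding).2 h4
  · have e := Complex.volume_preserving_equiv_real_prod.integral_comp
      Complex.measurableEquivRealProd.measurableEmbedding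
      (fun p : ℝ × ℝ => (y⁻¹)^3 * (1 + ((p.1 - x) / y)^2)⁻¹ *
        (Icc (-a) 0).indicator (fun _ => (1:ℝ)) p.2)
    refine Eq.trans e ?_
    rw [Measure.volume_eq_prod, integral_prod_mul (fun t : ℝ => (y⁻¹)^3 * (1 + ((t - x) / y)^2)⁻¹)
      (fun t : ℝ => (Icc (-a) 0).indicator (fun _ => (1:ℝ)) t), integral_const_mul,
      integral_sub_right_eq_self (fun t : ℝ => (1 + (t / y)^2)⁻¹) x,
      Measure.integral_comp_div (fun t : ℝ => (1 + t^2)⁻¹) y, integral_univ_inv_one_add_sq,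
      integral_indicator measurableSet_Icc, abs_of_pos hy]
    simp [ha.le]
    field_simp
    simp

lemma pt_far (w : ℂ) (R : ℝ) (hR : 0 < R) (h : R ≤ ‖w‖) :
    (‖w‖^3)⁻¹ ≤ 8 * (R⁻¹)^3 * (1 + ‖R⁻¹ • w‖) ^ (-3 : ℝ) := by
  have hw : 0 < ‖w‖ := hR.trans_le h
  rw [norm_smul, Real.norm_of_nonneg (by positivity : (0:ℝ) ≤ R⁻¹),
    Real.rpow_neg (by positivity)]
  have : 8 * (R⁻¹)^3 * ((1 + R⁻¹ * ‖w‖) ^ (3 : ℝ))⁻¹ = (((R + ‖w‖)/2)^3)⁻¹ := by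
    rw [show (3:ℝ) = ((3:ℕ):ℝ) by norm_num, Real.rpow_natCast]
    field_simp
    norm_num
  rw [this]
  gcongr
  linarith

lemma pt_strip (w : ℂ) (y : ℝ) (hy : 0 < y) (h : w.im ≤ -y) :
    (‖w‖^3)⁻¹ ≤ (y⁻¹)^3 * (1 + (w.re / y)^2)⁻¹ := by
  have e : (y⁻¹)^3 * (1 + (w.re / y)^2)⁻¹ = (y * (w.re^2 + y^2))⁻¹ := by
    field_simp
    ring
  rw [e]
  have h1 : y ≤ ‖w‖ := by
    have := Complex.abs_im_le_norm w
    have := neg_le_abs w.im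
    linarith
  have h2 : w.re^2 + y^2 ≤ ‖w‖^2 := by
    rw [Complex.sq_norm, Complex.normSq_apply]
    nlinarith
  have h3 : y * (w.re^2 + y^2) ≤ ‖w‖^3 := by
    calc _ ≤ ‖w‖ * ‖w‖^2 := by gcongr
      _ = _ := by ring
  exact inv_anti₀ (by positivity) h3

theorem stmt5 : ∃ C : ℝ, 0 < C ∧ ∀ μ : ℂ → ℂ, Measurable μ →
    (∀ᵐ ζ : ℂ, ‖μ ζ‖ ≤ 1) → (∀ ζ : ℂ, 0 ≤ ζ.im → μ ζ = 0) →
    ∀ x y L : ℝ, 0 < y → 0 < L →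
    (∀ᵐ w : ℂ, w ∈ {w : ℂ |
        w.re ∈ Set.Icc (x - Real.exp L * y) (x + Real.exp L * y) ∧
        w.im ∈ Set.Icc (-(Real.exp L * y)) (-(Real.exp (-L) * y))} → μ w = 0) →
    2 * y * ‖Tderiv μ ((x : ℂ) + (y : ℂ) * Complex.I)‖ ≤ C * Real.exp (-L) := by
  set K : ℝ := ∫ ζ : ℂ, (1 + ‖ζ‖) ^ (-3 : ℝ) with hK
  have hK0 : 0 ≤ K := integral_nonneg fun ζ => by positivity
  refine ⟨4 + 32 * K / Real.pi, by positivity, ?_⟩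
  intro μ _ hμ1 hμ0 x y L hy hL hQ
  set z : ℂ := (x : ℂ) + (y : ℂ) * Complex.I with hz
  have zre : z.re = x := by simp [hz]
  have zim : z.im = y := by simp [hz]
  have hR : 0 < Real.exp L * y := by positivity
  have ha : 0 < Real.exp (-L) * y := by positivity
  obtain ⟨i1, v1⟩ := aux_far z _ hR
  obtain ⟨i2, v2⟩ := aux_strip x y _ hy ha
  have hset : ∫ ζ in {ζ : ℂ | ζ.im < 0}, μ ζ / (ζ - z)^3 = ∫ ζ : ℂ, μ ζ / (ζ - z)^3 := by
    apply setIntegral_eq_integral_of_forall_compl_eq_zero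
    intro ζ hζ
    rw [hμ0 ζ (not_lt.1 hζ), zero_div]
  have hb : ‖∫ ζ : ℂ, μ ζ / (ζ - z)^3‖ ≤
      8 * (Real.exp L * y)⁻¹ * K + (y⁻¹)^2 * Real.pi * (Real.exp (-L) * y) := by
    rw [← v1, ← v2, ← integral_add i1 i2]
    refine norm_integral_le_of_norm_le (i1.add i2) ?_
    filter_upwards [hμ1, hQ] with ζ h1 h2
    have p1 : 0 ≤ 8 * ((Real.exp L * y)⁻¹)^3 *
        (1 + ‖(Real.exp L * y)⁻¹ • (ζ - z)‖) ^ (-3 : ℝ) := by positivity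
    have p2 : 0 ≤ (y⁻¹)^3 * (1 + ((ζ.re - x) / y)^2)⁻¹ *
      (Icc (-(Real.exp (-L) * y)) 0).indicator (fun _ => (1:ℝ)) ζ.im :=
      mul_nonneg (by positivity) (indicator_nonneg (fun _ _ => zero_le_one) _)
    by_cases hm : μ ζ = 0
    · simp only [hm, zero_div, norm_zero]
      exact add_nonneg p1 p2
    have him : ζ.im < 0 := by
      by_contra hc
      exact hm (hμ0 ζ (not_lt.1 hc))
    have hle : ‖μ ζ / (ζ - z)^3‖ ≤ (‖ζ - z‖^3)⁻¹ := by
      rw [norm_div, norm_pow, div_eq_mul_inv]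
      exact mul_le_of_le_one_left (by positivity) h1
    refine hle.trans ?_
    by_cases hs : -(Real.exp (-L) * y) ≤ ζ.im
    · refine le_add_of_nonneg_of_le p1 ?_
      rw [indicator_of_mem (show ζ.im ∈ Icc (-(Real.exp (-L) * y)) 0 from ⟨hs, him.le⟩), mul_one]
      have := pt_strip (ζ - z) y hy (by rw [sub_im, zim]; linarith)
      rwa [sub_re, zre] at this
    · refine le_add_of_le_of_nonneg (pt_far _ _ hR ?_) p2
      by_contra hc
      push Not at hc hs
      apply hm
      apply h2
      have r1 := (abs_le.1 ((Complex.abs_re_le_norm (ζ - z)).trans hc.le))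
      have r2 := (abs_le.1 ((Complex.abs_im_le_norm (ζ - z)).trans hc.le))
      rw [sub_re, zre] at r1
      rw [sub_im, zim] at r2
      exact ⟨⟨by linarith [r1.1], by linarith [r1.2]⟩, ⟨by linarith [r2.1], hs.le⟩⟩
  unfold Tderiv
  rw [hset, norm_mul, norm_neg, norm_div, Complex.norm_real, Real.norm_of_nonneg Real.pi_pos.le,
    Complex.norm_ofNat]
  calc 2 * y * (2 / Real.pi * ‖∫ ζ : ℂ, μ ζ / (ζ - z)^3‖) ≤
      2 * y * (2 / Real.pi * (8 * (Real.exp L * y)⁻¹ * K +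
        (y⁻¹)^2 * Real.pi * (Real.exp (-L) * y))) := by gcongr
    _ = _ := by
      rw [mul_inv, ← Real.exp_neg]
      field_simp
      ring
end

section
/- Let y₀ > 0, α > 0, and let β > 0 be the positive root of β² + β = α. Suppose u : (0, y₀] → ℝ is twice continuously differentiable with u(y) ≥ 0 and u'(y) ≤ 0 for all y ∈ (0, y₀], and satisfies the differential inequality u''(y) ≤ α·u(y)/y² on (0, y₀]. If C > 0 is such that u(y₀) ≤ C·y₀^{−β} and −u'(y₀) ≤ β·C·y₀^{−β−1}, then u(y) ≤ C·y^{−β} for all y ∈ (0, y₀]. -/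
open Set

theorem stmt7 (y₀ α β : ℝ) (hy₀ : 0 < y₀) (hα : 0 < α)
    (hβ : 0 < β) (hβα : β^2 + β = α)
    (u u' u'' : ℝ → ℝ)
    (hder1 : ∀ y ∈ Set.Ioc 0 y₀, HasDerivWithinAt u (u' y) (Set.Ioc 0 y₀) y)
    (hder2 : ∀ y ∈ Set.Ioc 0 y₀, HasDerivWithinAt u' (u'' y) (Set.Ioc 0 y₀) y)
    (hcont : ContinuousOn u'' (Set.Ioc 0 y₀))
    (hnonneg : ∀ y ∈ Set.Ioc 0 y₀, 0 ≤ u y)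
    (hdec : ∀ y ∈ Set.Ioc 0 y₀, u' y ≤ 0)
    (hineq : ∀ y ∈ Set.Ioc 0 y₀, u'' y ≤ α * u y / y^2)
    (C : ℝ) (hC : 0 < C)
    (hval : u y₀ ≤ C * y₀ ^ (-β))
    (hder : -u' y₀ ≤ β * C * y₀ ^ (-β - 1)) :
    ∀ y ∈ Set.Ioc 0 y₀, u y ≤ C * y ^ (-β) := by
  have hint : interior (Set.Ioc 0 y₀) ⊆ Set.Ioc 0 y₀ := interior_subset
  have hG1 : ∀ y ∈ Set.Ioc 0 y₀, HasDerivWithinAt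
      (fun y => y ^ (β + 1) * u' y - (β + 1) * (y ^ β * u y))
      (y ^ (β + 1) * (u'' y - α * u y / y ^ 2)) (Set.Ioc 0 y₀) y := by
    intro y hy
    have h0 : (0:ℝ) < y := hy.1
    have e1 := (Real.hasDerivAt_rpow_const (x := y) (p := β + 1) (Or.inl h0.ne')).hasDerivWithinAt
      (s := Set.Ioc 0 y₀)
    have e2 := (Real.hasDerivAt_rpow_const (x := y) (p := β) (Or.inl h0.ne')).hasDerivWithinAt
      (s := Set.Ioc 0 y₀)
    refine ((e1.mul (hder2 y hy)).sub ((e2.mul (hder1 y hy)).const_mul (β + 1))).congr_deriv ?_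
    have a1 : y ^ (β + 1 - 1) = y ^ β := by ring_nf
    have a2 : y ^ (β + 1) = y ^ β * y := by rw [Real.rpow_add h0, Real.rpow_one]
    have a3 : y ^ (β - 1) = y ^ β / y := by rw [Real.rpow_sub h0, Real.rpow_one]
    rw [a1, a2, a3, ← hβα]
    field_simp
    ring
  have hG : AntitoneOn (fun y => y ^ (β + 1) * u' y - (β + 1) * (y ^ β * u y)) (Set.Ioc 0 y₀) := by
    refine antitoneOn_of_hasDerivWithinAt_nonpos (convex_Ioc 0 y₀)
      (fun y hy => (hG1 y hy).continuousWithinAt)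
      (fun y hy => (hG1 y (hint hy)).mono hint) ?_
    intro y hy
    have hy := hint hy
    have := hineq y hy
    exact mul_nonpos_of_nonneg_of_nonpos (Real.rpow_nonneg hy.1.le _) (by linarith)
  have hmem : y₀ ∈ Set.Ioc 0 y₀ := ⟨hy₀, le_rfl⟩
  have hGlow : ∀ y ∈ Set.Ioc 0 y₀,
      0 ≤ y ^ (β + 1) * u' y - (β + 1) * (y ^ β * u y) + (2 * β + 1) * C := by
    intro y hy
    have h1 := hG hy hmem hy.2
    simp only at h1
    have p1 : 0 < y₀ ^ (β + 1) := Real.rpow_pos_of_pos hy₀ _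
    have p2 : 0 < y₀ ^ β := Real.rpow_pos_of_pos hy₀ _
    have q1 : y₀ ^ (β + 1) * y₀ ^ (-β - 1) = 1 := by
      rw [← Real.rpow_add hy₀]; simp
    have q2 : y₀ ^ β * y₀ ^ (-β) = 1 := by
      rw [← Real.rpow_add hy₀]; simp
    have r1 : y₀ ^ (β + 1) * (-u' y₀) ≤ β * C := by
      calc _ ≤ y₀ ^ (β + 1) * (β * C * y₀ ^ (-β - 1)) := mul_le_mul_of_nonneg_left hder p1.le
        _ = β * C * (y₀ ^ (β + 1) * y₀ ^ (-β - 1)) := by ring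
        _ = β * C := by rw [q1, mul_one]
    have r2 : y₀ ^ β * u y₀ ≤ C := by
      calc _ ≤ y₀ ^ β * (C * y₀ ^ (-β)) := mul_le_mul_of_nonneg_left hval p2.le
        _ = C * (y₀ ^ β * y₀ ^ (-β)) := by ring
        _ = C := by rw [q2, mul_one]
    have r3 := mul_le_mul_of_nonneg_left r2 (by linarith : 0 ≤ β + 1)
    linarith
  have hH1 : ∀ y ∈ Set.Ioc 0 y₀, HasDerivWithinAt
      (fun y => y ^ (-(β + 1)) * u y - C * y ^ (-(2 * β + 1)))
      (y ^ (-(2 * β + 2)) *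
        (y ^ (β + 1) * u' y - (β + 1) * (y ^ β * u y) + (2 * β + 1) * C)) (Set.Ioc 0 y₀) y := by
    intro y hy
    have h0 : (0:ℝ) < y := hy.1
    have e1 := (Real.hasDerivAt_rpow_const (x := y) (p := -(β + 1))
      (Or.inl h0.ne')).hasDerivWithinAt (s := Set.Ioc 0 y₀)
    have e2 := (Real.hasDerivAt_rpow_const (x := y) (p := -(2 * β + 1))
      (Or.inl h0.ne')).hasDerivWithinAt (s := Set.Ioc 0 y₀)
    refine ((e1.mul (hder1 y hy)).sub (e2.const_mul C)).congr_deriv ?_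
    have a1 : y ^ (-(β + 1) - 1) = y ^ (-(2 * β + 2)) * y ^ β := by
      rw [← Real.rpow_add h0]; ring_nf
    have a2 : y ^ (-(β + 1)) = y ^ (-(2 * β + 2)) * y ^ (β + 1) := by
      rw [← Real.rpow_add h0]; ring_nf
    have a3 : y ^ (-(2 * β + 1) - 1) = y ^ (-(2 * β + 2)) := by ring_nf
    rw [a1, a2, a3]
    ring
  have hH : MonotoneOn (fun y => y ^ (-(β + 1)) * u y - C * y ^ (-(2 * β + 1)))
      (Set.Ioc 0 y₀) := by
    refine monotoneOn_of_hasDerivWithinAt_nonneg (convex_Ioc 0 y₀)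
      (fun y hy => (hH1 y hy).continuousWithinAt)
      (fun y hy => (hH1 y (hint hy)).mono hint) ?_
    intro y hy
    have hy := hint hy
    exact mul_nonneg (Real.rpow_nonneg hy.1.le _) (hGlow y hy)
  have hfac : ∀ y : ℝ, 0 < y → y ^ (-(β + 1)) * u y - C * y ^ (-(2 * β + 1))
      = y ^ (-(β + 1)) * (u y - C * y ^ (-β)) := by
    intro y h0
    have : y ^ (-(2 * β + 1)) = y ^ (-(β + 1)) * y ^ (-β) := by
      rw [← Real.rpow_add h0]; ring_nf
    rw [this]; ring
  intro y hy
  have h1 := hH hy hmem hy.2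
  simp only at h1
  rw [hfac y hy.1, hfac y₀ hy₀] at h1
  have h2 : y₀ ^ (-(β + 1)) * (u y₀ - C * y₀ ^ (-β)) ≤ 0 :=
    mul_nonpos_of_nonneg_of_nonpos (Real.rpow_nonneg hy₀.le _) (by linarith)
  have h3 : u y - C * y ^ (-β) ≤ 0 :=
    nonpos_of_mul_nonpos_right (h1.trans h2) (Real.rpow_pos_of_pos hy.1 _)
  linarith
end

section
/- Let y₀ > 0, α > 0, and let β > 0 be the positive root of β² + β = α. Suppose u : (0, y₀] → ℝ is twice continuously differentiable with u(y) ≥ 0 and u'(y) ≤ 0 for all y ∈ (0, y₀], and satisfies the differential inequality u''(y) ≥ α·u(y)/y² on (0, y₀]. If c > 0 is such that u(y₀) ≥ c·y₀^{−β} and −u'(y₀) ≥ β·c·y₀^{−β−1}, then u(y) ≥ c·y^{−β} for all y ∈ (0, y₀]. -/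
open Set

theorem stmt8 (y₀ α β : ℝ) (hy₀ : 0 < y₀) (hα : 0 < α)
    (hβ : 0 < β) (hβα : β^2 + β = α)
    (u u' u'' : ℝ → ℝ)
    (hder1 : ∀ y ∈ Set.Ioc 0 y₀, HasDerivWithinAt u (u' y) (Set.Ioc 0 y₀) y)
    (hder2 : ∀ y ∈ Set.Ioc 0 y₀, HasDerivWithinAt u' (u'' y) (Set.Ioc 0 y₀) y)
    (hcont : ContinuousOn u'' (Set.Ioc 0 y₀))
    (hnonneg : ∀ y ∈ Set.Ioc 0 y₀, 0 ≤ u y)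
    (hdec : ∀ y ∈ Set.Ioc 0 y₀, u' y ≤ 0)
    (hineq : ∀ y ∈ Set.Ioc 0 y₀, α * u y / y^2 ≤ u'' y)
    (c : ℝ) (hc : 0 < c)
    (hval : c * y₀ ^ (-β) ≤ u y₀)
    (hder : β * c * y₀ ^ (-β - 1) ≤ -u' y₀) :
    ∀ y ∈ Set.Ioc 0 y₀, c * y ^ (-β) ≤ u y := by
  have hmem : y₀ ∈ Set.Ioc 0 y₀ := ⟨hy₀, le_rfl⟩
  have hp : ∀ (p : ℝ), ∀ y ∈ Set.Ioc 0 y₀,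
      HasDerivWithinAt (fun x : ℝ => x ^ p) (p * y ^ (p - 1)) (Set.Ioc 0 y₀) y := fun p y hy =>
    (Real.hasDerivAt_rpow_const (Or.inl hy.1.ne')).hasDerivWithinAt
  have hG : ∀ y ∈ Set.Ioc 0 y₀, HasDerivWithinAt
      (fun x => x ^ (β + 1) * u' x - (β + 1) * (x ^ β * u x))
      (y ^ (β + 1) * (u'' y - α * u y / y ^ 2)) (Set.Ioc 0 y₀) y := by
    intro y hy
    have hy0 : 0 < y := hy.1
    refine (((hp (β + 1) y hy).mul (hder2 y hy)).sub
      (((hp β y hy).mul (hder1 y hy)).const_mul (β + 1))).congr_deriv ?_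
    rw [← hβα, show β + 1 - 1 = β by ring, Real.rpow_sub_one hy0.ne', Real.rpow_add_one hy0.ne']
    field_simp
    ring
  have hGm : MonotoneOn (fun x => x ^ (β + 1) * u' x - (β + 1) * (x ^ β * u x))
      (Set.Ioc 0 y₀) := by
    refine monotoneOn_of_hasDerivWithinAt_nonneg (convex_Ioc 0 y₀)
      (fun y hy => (hG y hy).continuousWithinAt)
      (fun y hy => (hG y (interior_subset hy)).mono interior_subset) ?_
    intro y hy
    have hy := interior_subset hy
    exact mul_nonneg (Real.rpow_nonneg hy.1.le _) (sub_nonneg.2 (hineq y hy))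
  have hG0 : y₀ ^ (β + 1) * u' y₀ - (β + 1) * (y₀ ^ β * u y₀) ≤ -((2 * β + 1) * c) := by
    have h1 := mul_le_mul_of_nonneg_left hval (Real.rpow_nonneg hy₀.le β)
    have h2 := mul_le_mul_of_nonneg_left hder (Real.rpow_nonneg hy₀.le (β + 1))
    have e1 : y₀ ^ β * (c * y₀ ^ (-β)) = c := by
      rw [mul_left_comm, ← Real.rpow_add hy₀]; simp
    have e2 : y₀ ^ (β + 1) * (β * c * y₀ ^ (-β - 1)) = β * c := by
      rw [mul_left_comm, ← Real.rpow_add hy₀, show β + 1 + (-β - 1) = 0 by ring]; simp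
    rw [e1] at h1
    rw [e2] at h2
    nlinarith
  have hH : ∀ y ∈ Set.Ioc 0 y₀, HasDerivWithinAt
      (fun x => x ^ (-β - 1) * u x - c * x ^ (-(2 * β) - 1))
      (y ^ (-(2 * β) - 1 - 1) * (y ^ (β + 1) * u' y - (β + 1) * (y ^ β * u y) + (2 * β + 1) * c))
      (Set.Ioc 0 y₀) y := by
    intro y hy
    have hy0 : 0 < y := hy.1
    refine (((hp (-β - 1) y hy).mul (hder1 y hy)).sub
      ((hp (-(2 * β) - 1) y hy).const_mul c)).congr_deriv ?_
    have e1 : y ^ (-β - 1) = y ^ (-(2 * β) - 1 - 1) * y ^ (β + 1) := by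
      rw [← Real.rpow_add hy0]; ring_nf
    have e2 : y ^ (-β - 1 - 1) = y ^ (-(2 * β) - 1 - 1) * y ^ β := by
      rw [← Real.rpow_add hy0]; ring_nf
    rw [e1, e2]
    ring
  have hHm : AntitoneOn (fun x => x ^ (-β - 1) * u x - c * x ^ (-(2 * β) - 1))
      (Set.Ioc 0 y₀) := by
    refine antitoneOn_of_hasDerivWithinAt_nonpos (convex_Ioc 0 y₀)
      (fun y hy => (hH y hy).continuousWithinAt)
      (fun y hy => (hH y (interior_subset hy)).mono interior_subset) ?_
    intro y hy
    have hy := interior_subset hy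
    have := hGm hy hmem hy.2
    simp only at this
    exact mul_nonpos_of_nonneg_of_nonpos (Real.rpow_nonneg hy.1.le _) (by linarith)
  have key : ∀ y ∈ Set.Ioc 0 y₀, y ^ (-β - 1) * u y - c * y ^ (-(2 * β) - 1)
      = y ^ (-β - 1) * (u y - c * y ^ (-β)) := by
    intro y hy
    have e : y ^ (-(2 * β) - 1) = y ^ (-β - 1) * y ^ (-β) := by
      rw [← Real.rpow_add hy.1]; ring_nf
    rw [e]; ring
  intro y hy
  have h := hHm hy hmem hy.2
  simp only at h
  rw [key y hy, key y₀ hmem] at h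
  have h0 := mul_nonneg (Real.rpow_nonneg hy₀.le (-β - 1)) (sub_nonneg.2 hval)
  exact sub_nonneg.1 (nonneg_of_mul_nonneg_right (h0.trans h) (Real.rpow_pos_of_pos hy.1 _))
end

section
/- Let g be a holomorphic function on the upper half-plane ℍ = {z : Im z > 0} satisfying g(z+1) = g(z) for all z ∈ ℍ, and let p ∈ ℂ. Define I_p(y) := ∫₀¹ exp( Re(p·g(x+iy)) ) dx for y > 0. Then I_p is twice continuously differentiable on (0, ∞), with I_p'(y) = −∫₀¹ exp( Re(p·g(x+iy)) ) · Im( p·g'(x+iy) ) dx and I_p''(y) = |p|² ∫₀¹ exp( Re(p·g(x+iy)) ) · |g'(x+iy)|² dx. In particular I_p''(y) ≥ 0, i.e. I_p is convex. -/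
open Complex MeasureTheory Filter Topology Set

/-- The integral means `I_p(y) = ∫₀¹ exp(Re(p·g(x+iy))) dx`. -/
noncomputable def Ip (g : ℂ → ℂ) (p : ℂ) (y : ℝ) : ℝ :=
  ∫ x in (0:ℝ)..1, Real.exp ((p * g ((x : ℂ) + (y : ℂ) * Complex.I)).re)

/-- The claimed first derivative of `I_p`:
`I_p'(y) = −∫₀¹ exp(Re(p·g(x+iy))) · Im(p·g'(x+iy)) dx`. -/
noncomputable def Ip' (g : ℂ → ℂ) (p : ℂ) (y : ℝ) : ℝ :=
  -∫ x in (0:ℝ)..1, Real.exp ((p * g ((x : ℂ) + (y : ℂ) * Complex.I)).re) *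
      (p * deriv g ((x : ℂ) + (y : ℂ) * Complex.I)).im

/-- The claimed second derivative of `I_p`:
`I_p''(y) = |p|² ∫₀¹ exp(Re(p·g(x+iy))) · |g'(x+iy)|² dx`. -/
noncomputable def Ip'' (g : ℂ → ℂ) (p : ℂ) (y : ℝ) : ℝ :=
  ‖p‖^2 * ∫ x in (0:ℝ)..1, Real.exp ((p * g ((x : ℂ) + (y : ℂ) * Complex.I)).re) *
      ‖deriv g ((x : ℂ) + (y : ℂ) * Complex.I)‖^2

namespace HardyAux

abbrev UH : Set ℂ := {z : ℂ | 0 < z.im}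

lemma isOpen_UH : IsOpen UH := isOpen_lt continuous_const Complex.continuous_im

lemma mem_UH (x : ℝ) {y : ℝ} (hy : 0 < y) : (x : ℂ) + (y : ℂ) * Complex.I ∈ UH := by
  simpa [UH] using hy

lemma cont_x {F : ℂ → ℝ} (hF : ContinuousOn F UH) {y : ℝ} (hy : 0 < y) :
    Continuous (fun x : ℝ => F ((x : ℂ) + (y : ℂ) * Complex.I)) :=
  hF.comp_continuous (by fun_prop) (fun x => mem_UH x hy)

lemma bound_exists {F : ℂ → ℝ} (hF : ContinuousOn F UH) {y : ℝ} (hy : 0 < y) :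
    ∃ C : ℝ, ∀ t ∈ Icc (y / 2) (2 * y), ∀ x ∈ Icc (0 : ℝ) 1,
      ‖F ((x : ℂ) + (t : ℂ) * Complex.I)‖ ≤ C := by
  have hK : IsCompact (Icc (y / 2) (2 * y) ×ˢ Icc (0 : ℝ) 1) := isCompact_Icc.prod isCompact_Icc
  have hc : ContinuousOn (fun q : ℝ × ℝ => F ((q.2 : ℂ) + (q.1 : ℂ) * Complex.I))
      (Icc (y / 2) (2 * y) ×ˢ Icc (0 : ℝ) 1) := by
    refine hF.comp (by fun_prop) ?_
    rintro ⟨t, x⟩ ⟨ht, hx⟩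
    exact mem_UH x (lt_of_lt_of_le (by linarith) ht.1)
  obtain ⟨C, hC⟩ := hK.exists_bound_of_continuousOn hc
  exact ⟨C, fun t ht x hx => hC (t, x) ⟨ht, hx⟩⟩

lemma uIoc_sub {x : ℝ} (hx : x ∈ Set.uIoc (0 : ℝ) 1) : x ∈ Icc (0 : ℝ) 1 := by
  rw [Set.uIoc_of_le zero_le_one] at hx
  exact ⟨hx.1.le, hx.2⟩

lemma nhds_mem {y : ℝ} (hy : 0 < y) : Icc (y / 2) (2 * y) ∈ 𝓝 y :=
  Icc_mem_nhds (by linarith) (by linarith)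

lemma hasDerivAt_int {F F' : ℂ → ℝ} (hF : ContinuousOn F UH) (hF' : ContinuousOn F' UH)
    (hd : ∀ x y : ℝ, 0 < y → HasDerivAt (fun t : ℝ => F ((x : ℂ) + (t : ℂ) * Complex.I))
      (F' ((x : ℂ) + (y : ℂ) * Complex.I)) y) {y : ℝ} (hy : 0 < y) :
    HasDerivAt (fun t : ℝ => ∫ x in (0:ℝ)..1, F ((x : ℂ) + (t : ℂ) * Complex.I))
      (∫ x in (0:ℝ)..1, F' ((x : ℂ) + (y : ℂ) * Complex.I)) y := by
  obtain ⟨C, hC⟩ := bound_exists hF' hy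
  refine (intervalIntegral.hasDerivAt_integral_of_dominated_loc_of_deriv_le
    (F := fun t x : ℝ => F ((x : ℂ) + (t : ℂ) * Complex.I))
    (F' := fun t x : ℝ => F' ((x : ℂ) + (t : ℂ) * Complex.I))
    (bound := fun _ => C) (nhds_mem hy) ?_ ?_ ?_ ?_ ?_ ?_).2
  · filter_upwards [lt_mem_nhds hy] with t ht
    exact (cont_x hF ht).aestronglyMeasurable
  · exact (cont_x hF hy).intervalIntegrable _ _
  · exact (cont_x hF' hy).aestronglyMeasurable
  · exact Eventually.of_forall fun x hx t ht => hC t ht x (uIoc_sub hx)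
  · exact intervalIntegrable_const
  · exact Eventually.of_forall fun x hx t ht => hd x t (lt_of_lt_of_le (by linarith) ht.1)

lemma continuousOn_int {F : ℂ → ℝ} (hF : ContinuousOn F UH) :
    ContinuousOn (fun t : ℝ => ∫ x in (0:ℝ)..1, F ((x : ℂ) + (t : ℂ) * Complex.I)) (Ioi 0) := by
  intro y hy
  have hy : 0 < y := hy
  obtain ⟨C, hC⟩ := bound_exists hF hy
  refine ContinuousAt.continuousWithinAt ?_
  refine intervalIntegral.continuousAt_of_dominated_interval (bound := fun _ => C) ?_ ?_ ?_ ?_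
  · filter_upwards [lt_mem_nhds hy] with t ht
    exact (cont_x hF ht).aestronglyMeasurable
  · filter_upwards [nhds_mem hy] with t ht
    exact Eventually.of_forall fun x hx => hC t ht x (uIoc_sub hx)
  · exact intervalIntegrable_const
  · refine Eventually.of_forall fun x hx => ?_
    have h1 : ContinuousAt F ((x : ℂ) + (y : ℂ) * Complex.I) :=
      hF.continuousAt (isOpen_UH.mem_nhds (mem_UH x hy))
    exact ContinuousAt.comp (f := fun t : ℝ => (x : ℂ) + (t : ℂ) * Complex.I) h1
      (by fun_prop)

lemma deriv_y {w : ℂ → ℂ} {w' : ℂ} {x y : ℝ}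
    (h : HasDerivAt w w' ((x : ℂ) + (y : ℂ) * Complex.I)) :
    HasDerivAt (fun t : ℝ => w ((x : ℂ) + (t : ℂ) * Complex.I)) (w' * Complex.I) y := by
  have h2 : HasDerivAt (fun t : ℝ => (x : ℂ) + (t : ℂ) * Complex.I) Complex.I y := by
    simpa using ((Complex.ofRealCLM.hasDerivAt (x := y)).mul_const Complex.I).const_add (x : ℂ)
  exact HasDerivAt.comp (h₂ := w) y h h2

lemma deriv_x {w : ℂ → ℂ} {w' : ℂ} {x y : ℝ}
    (h : HasDerivAt w w' ((x : ℂ) + (y : ℂ) * Complex.I)) :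
    HasDerivAt (fun t : ℝ => w ((t : ℂ) + (y : ℂ) * Complex.I)) w' x := by
  have h2 : HasDerivAt (fun t : ℝ => (t : ℂ) + (y : ℂ) * Complex.I) 1 x := by
    simpa using (Complex.ofRealCLM.hasDerivAt (x := x)).add_const ((y : ℂ) * Complex.I)
  exact (HasDerivAt.comp (h₂ := w) x h h2).congr_deriv (mul_one _)

lemma hre {f : ℝ → ℂ} {f' : ℂ} {x : ℝ} (h : HasDerivAt f f' x) :
    HasDerivAt (fun t => (f t).re) f'.re x :=
  (Complex.reCLM.hasFDerivAt.comp_hasDerivAt x h)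

lemma him {f : ℝ → ℂ} {f' : ℂ} {x : ℝ} (h : HasDerivAt f f' x) :
    HasDerivAt (fun t => (f t).im) f'.im x :=
  (Complex.imCLM.hasFDerivAt.comp_hasDerivAt x h)

end HardyAux

open HardyAux in
theorem stmt9 (g : ℂ → ℂ)
    (hg : DifferentiableOn ℂ g {z : ℂ | 0 < z.im})
    (hper : ∀ z : ℂ, 0 < z.im → g (z + 1) = g z) (p : ℂ) :
    (∀ y : ℝ, 0 < y → HasDerivAt (Ip g p) (Ip' g p y) y) ∧
    (∀ y : ℝ, 0 < y → HasDerivAt (Ip' g p) (Ip'' g p y) y) ∧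
    ContinuousOn (Ip'' g p) (Set.Ioi 0) ∧
    (∀ y : ℝ, 0 < y → 0 ≤ Ip'' g p y) := by
  have hg1 : DifferentiableOn ℂ (deriv g) UH := hg.deriv isOpen_UH
  have hg2 : DifferentiableOn ℂ (deriv (deriv g)) UH := hg1.deriv isOpen_UH
  have cg : ContinuousOn g UH := hg.continuousOn
  have cg1 := hg1.continuousOn
  have cg2 := hg2.continuousOn
  have d0 : ∀ z ∈ UH, HasDerivAt (fun z => p * g z) (p * deriv g z) z := fun z hz =>
    ((hg.differentiableAt (isOpen_UH.mem_nhds hz)).hasDerivAt).const_mul p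
  have d1 : ∀ z ∈ UH, HasDerivAt (fun z => p * deriv g z) (p * deriv (deriv g) z) z := fun z hz =>
    ((hg1.differentiableAt (isOpen_UH.mem_nhds hz)).hasDerivAt).const_mul p
  have cE : ContinuousOn (fun z => Real.exp ((p * g z).re)) UH :=
    Real.continuous_exp.comp_continuousOn
      (Complex.continuous_re.comp_continuousOn (continuousOn_const.mul cg))
  have c1i : ContinuousOn (fun z => (p * deriv g z).im) UH :=
    Complex.continuous_im.comp_continuousOn (continuousOn_const.mul cg1)
  have c1r : ContinuousOn (fun z => (p * deriv g z).re) UH :=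
    Complex.continuous_re.comp_continuousOn (continuousOn_const.mul cg1)
  have c2r : ContinuousOn (fun z => (p * deriv (deriv g) z).re) UH :=
    Complex.continuous_re.comp_continuousOn (continuousOn_const.mul cg2)
  have cN : ContinuousOn (fun z => Real.exp ((p * g z).re) * ‖deriv g z‖ ^ 2) UH :=
    cE.mul (cg1.norm.pow 2)
  have dE : ∀ x y : ℝ, 0 < y →
      HasDerivAt (fun t : ℝ => Real.exp ((p * g ((x : ℂ) + (t : ℂ) * Complex.I)).re))
      (-(Real.exp ((p * g ((x : ℂ) + (y : ℂ) * Complex.I)).re) *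
        (p * deriv g ((x : ℂ) + (y : ℂ) * Complex.I)).im)) y := by
    intro x y hy
    have h := (hre (deriv_y (d0 _ (mem_UH x hy)))).exp
    rw [Complex.mul_I_re, mul_neg] at h
    exact h
  have per1 : ∀ z ∈ UH, deriv g (z + 1) = deriv g z := by
    intro z hz
    rw [← deriv_comp_add_const]
    apply Filter.EventuallyEq.deriv_eq
    filter_upwards [isOpen_UH.mem_nhds hz] with w hw using hper w hw
  refine ⟨?_, ?_, ?_, ?_⟩
  · intro y hy
    have h := hasDerivAt_int (F' := fun z => -(Real.exp ((p * g z).re) * (p * deriv g z).im))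
      cE (cE.mul c1i).neg dE hy
    rw [intervalIntegral.integral_neg] at h
    exact h
  · intro y hy
    have h := (hasDerivAt_int (F := fun z => Real.exp ((p * g z).re) * (p * deriv g z).im)
      (F' := fun z => -(Real.exp ((p * g z).re) * (p * deriv g z).im) * (p * deriv g z).im +
        Real.exp ((p * g z).re) * (p * deriv (deriv g) z).re)
      (cE.mul c1i) (((cE.mul c1i).neg.mul c1i).add (cE.mul c2r)) (fun x y hy => by
        have h1 := him (deriv_y (d1 _ (mem_UH x hy)))
        rw [Complex.mul_I_im] at h1
        exact (dE x y hy).mul h1) hy).neg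
    refine h.congr_deriv ?_
    -- the exact x-derivative integrates to zero
    have c3 : ContinuousOn (fun z => Real.exp ((p * g z).re) * (p * deriv g z).re *
        (p * deriv g z).re + Real.exp ((p * g z).re) * (p * deriv (deriv g) z).re) UH :=
      ((cE.mul c1r).mul c1r).add (cE.mul c2r)
    have hz := intervalIntegral.integral_eq_sub_of_hasDerivAt (a := 0) (b := 1)
      (f := fun x : ℝ => Real.exp ((p * g ((x : ℂ) + (y : ℂ) * Complex.I)).re) *
        (p * deriv g ((x : ℂ) + (y : ℂ) * Complex.I)).re)
      (fun x _ => ((hre (deriv_x (d0 _ (mem_UH x hy)))).exp).mul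
        (hre (deriv_x (d1 _ (mem_UH x hy)))))
      ((cont_x c3 hy).intervalIntegrable _ _)
    have hm := mem_UH 0 hy
    have e1 := hper _ hm
    have e2 := per1 _ hm
    have e3 : (((0 : ℝ) : ℂ) + (y : ℂ) * Complex.I) + 1 = ((1 : ℝ) : ℂ) + (y : ℂ) * Complex.I := by
      push_cast; ring
    rw [e3] at e1 e2
    simp only [e1, e2, sub_self] at hz
    unfold Ip''
    rw [← intervalIntegral.integral_const_mul, ← intervalIntegral.integral_neg,
      ← sub_eq_zero, ← intervalIntegral.integral_sub, ← neg_eq_zero,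
      ← intervalIntegral.integral_neg]
    · refine Eq.trans (intervalIntegral.integral_congr fun x _ => ?_) hz
      have hn : ‖p‖ ^ 2 * ‖deriv g ((x : ℂ) + (y : ℂ) * Complex.I)‖ ^ 2 =
          (p * deriv g ((x : ℂ) + (y : ℂ) * Complex.I)).re ^ 2 +
          (p * deriv g ((x : ℂ) + (y : ℂ) * Complex.I)).im ^ 2 := by
        rw [← mul_pow, ← norm_mul, Complex.sq_norm, Complex.normSq_apply]; ring
      beta_reduce
      linear_combination Real.exp ((p * g ((x : ℂ) + (y : ℂ) * Complex.I)).re) * hn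
    · exact (cont_x (((cE.mul c1i).neg.mul c1i).add (cE.mul c2r)).neg hy).intervalIntegrable _ _
    · exact ((cont_x cN hy).const_mul _).intervalIntegrable _ _
  · exact continuousOn_const.mul (continuousOn_int cN)
  · intro y hy
    refine mul_nonneg (by positivity) ?_
    exact intervalIntegral.integral_nonneg zero_le_one fun x _ => by positivity
end

section
/- Let β₀ > 0 and let g be a holomorphic function on the upper half-plane ℍ satisfying g(z+1) = g(z) for all z ∈ ℍ, the Bloch bound 2 Im(z)|g'(z)| ≤ β₀ for all z ∈ ℍ, and g(x+iy) → 0 uniformly in x as y → ∞. Then for every p ∈ ℂ, p ≠ 0, letting β > 0 be the positive root of β² + β = β₀²|p|²/4, one has limsup_{y→0⁺} [ log( ∫₀¹ exp( Re(p·g(x+iy)) ) dx ) / log(1/y) ] ≤ β; in particular this limsup is at most β₀²|p|²/4. (Taking β₀ = 6k, this yields the Becker–Pommerenke bound β_f(p) ≤ 9k²|p|² for conformal maps f whose branch of log f' has Bloch norm at most 6k.) -/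
open Complex MeasureTheory Filter Topology Set

lemma hasDerivAt_int_aux (f f' : ℝ → ℝ → ℝ)
    (hf : ∀ t, 0 < t → Continuous (fun x => f x t))
    (hf' : ContinuousOn (fun q : ℝ × ℝ => f' q.1 q.2) {q | 0 < q.2})
    (hd : ∀ x t, 0 < t → HasDerivAt (fun s => f x s) (f' x t) t) (y : ℝ) (hy : 0 < y) :
    HasDerivAt (fun t => ∫ x in (0:ℝ)..1, f x t) (∫ x in (0:ℝ)..1, f' x y) y := by
  have hK : IsCompact (Icc (0:ℝ) 1 ×ˢ Icc (y/2) (2*y)) := isCompact_Icc.prod isCompact_Icc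
  obtain ⟨C, hC⟩ := hK.exists_bound_of_continuousOn (f := fun q : ℝ × ℝ => f' q.1 q.2)
    (hf'.mono (by
      rintro ⟨a, b⟩ ⟨_, hb⟩
      have h1 : y / 2 ≤ b := hb.1
      show 0 < b
      linarith))
  have hcy : Continuous (fun x => f' x y) := by
    have := hf'.comp_continuous (f := fun x : ℝ => (x, y)) (by fun_prop) (fun x => hy)
    exact this
  refine (intervalIntegral.hasDerivAt_integral_of_dominated_loc_of_deriv_le (μ := volume)
    (F := fun t x => f x t) (F' := fun t x => f' x t) (bound := fun _ => C)
    (s := Ioo (y/2) (2*y)) (Ioo_mem_nhds (by linarith) (by linarith)) ?_ ?_ ?_ ?_ ?_ ?_).2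
  · filter_upwards [lt_mem_nhds hy] with t ht
    exact (hf t ht).aestronglyMeasurable
  · exact (hf y hy).intervalIntegrable _ _
  · exact hcy.aestronglyMeasurable
  · refine ae_of_all _ fun x hx t ht => ?_
    rw [uIoc_of_le zero_le_one] at hx
    exact hC (x, t) ⟨⟨hx.1.le, hx.2⟩, ⟨ht.1.le, ht.2.le⟩⟩
  · exact intervalIntegrable_const
  · refine ae_of_all _ fun x hx t ht => hd x t ?_
    have := ht.1
    linarith

lemma compare_aux (F F' F'' : ℝ → ℝ) (β : ℝ) (hβ : 0 < β)
    (h1 : ∀ y, 0 < y → HasDerivAt F (F' y) y) (h2 : ∀ y, 0 < y → HasDerivAt F' (F'' y) y)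
    (h : ∀ y, 0 < y → y^2 * F'' y ≤ (β^2 + β) * F y) :
    ∃ A, ∀ y, 0 < y → y ≤ 1 → y ^ β * F y ≤ A := by
  set K : ℝ → ℝ := fun y => y * F' y + β * F y with hK
  have hKd : ∀ y, 0 < y → HasDerivAt (fun y => y ^ (-(1+β)) * K y)
      ((-(1+β)) * y ^ (-(1+β) - 1) * K y
        + y ^ (-(1+β)) * (1 * F' y + y * F'' y + β * F' y)) y := fun y hy =>
    (Real.hasDerivAt_rpow_const (Or.inl hy.ne')).mul
      (((hasDerivAt_id y).mul (h2 y hy)).add ((h1 y hy).const_mul β))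
  have anti : AntitoneOn (fun y => y ^ (-(1+β)) * K y) (Ioi 0) := by
    apply antitoneOn_of_deriv_nonpos (convex_Ioi 0)
    · exact fun y hy => (hKd y hy).continuousAt.continuousWithinAt
    · intro y hy
      rw [interior_Ioi] at hy
      exact (hKd y hy).differentiableAt.differentiableWithinAt
    · intro y hy
      rw [interior_Ioi] at hy
      have hy : 0 < y := hy
      rw [(hKd y hy).deriv]
      have e : y ^ (-(1+β)) = y ^ (-(1+β) - 1) * y := by
        rw [← Real.rpow_add_one hy.ne']; congr 1; ring
      rw [e]
      have hp : 0 < y ^ (-(1+β) - 1) := Real.rpow_pos_of_pos hy _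
      have := h y hy
      have e2 : (-(1+β)) * y ^ (-(1+β) - 1) * K y
        + y ^ (-(1+β) - 1) * y * (1 * F' y + y * F'' y + β * F' y)
        = y ^ (-(1+β) - 1) * (y^2 * F'' y - (β^2+β) * F y) := by
        simp only [hK]; ring
      rw [e2]
      exact mul_nonpos_of_nonneg_of_nonpos hp.le (by linarith)
  set M := |K 1| with hM
  have hKlow : ∀ y, 0 < y → y ≤ 1 → -M * y ^ (1+β) ≤ K y := by
    intro y hy hy1
    have := anti (show y ∈ Ioi (0:ℝ) from hy) (mem_Ioi.2 (zero_lt_one (α := ℝ))) hy1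
    simp only [Real.one_rpow, one_mul] at this
    have hp : 0 < y ^ (1+β) := Real.rpow_pos_of_pos hy _
    rw [Real.rpow_neg hy.le] at this
    have h3 : -M ≤ K 1 := neg_abs_le _
    have h4 : -M ≤ (y ^ (1+β))⁻¹ * K y := h3.trans this
    calc -M * y ^ (1+β) ≤ ((y ^ (1+β))⁻¹ * K y) * y ^ (1+β) := by gcongr
      _ = K y := by field_simp
  have hLd : ∀ y, 0 < y → HasDerivAt (fun y => y ^ β * F y + M * y)
      (β * y ^ (β - 1) * F y + y ^ β * F' y + M * 1) y := fun y hy =>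
    ((Real.hasDerivAt_rpow_const (Or.inl hy.ne')).mul (h1 y hy)).add
      ((hasDerivAt_id y).const_mul M)
  have mono : MonotoneOn (fun y => y ^ β * F y + M * y) (Ioc 0 1) := by
    apply monotoneOn_of_deriv_nonneg (convex_Ioc 0 1)
    · exact fun y hy => (hLd y hy.1).continuousAt.continuousWithinAt
    · intro y hy
      rw [interior_Ioc] at hy
      exact (hLd y hy.1).differentiableAt.differentiableWithinAt
    · intro y hy
      rw [interior_Ioc] at hy
      obtain ⟨hy, hy1⟩ := hy
      rw [(hLd y hy).deriv]
      have e : y ^ β = y ^ (β - 1) * y := by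
        rw [← Real.rpow_add_one hy.ne']; congr 1; ring
      have hp : 0 < y ^ (β - 1) := Real.rpow_pos_of_pos hy _
      have e2 : β * y ^ (β - 1) * F y + y ^ β * F' y + M * 1 = y ^ (β - 1) * K y + M := by
        rw [e]; simp only [hK]; ring
      rw [e2]
      have h3 := mul_le_mul_of_nonneg_left (hKlow y hy hy1.le) hp.le
      have h4 : y ^ (β - 1) * y ^ (1 + β) ≤ 1 := by
        rw [← Real.rpow_add hy]
        exact Real.rpow_le_one hy.le hy1.le (by linarith)
      have h5 : 0 ≤ M := abs_nonneg _
      nlinarith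
  refine ⟨F 1 + M, fun y hy hy1 => ?_⟩
  have := mono ⟨hy, hy1⟩ ⟨zero_lt_one, le_rfl⟩ hy1
  simp only [Real.one_rpow, one_mul, mul_one] at this
  have h5 : 0 ≤ M := abs_nonneg _
  nlinarith

lemma limsup_aux (F : ℝ → ℝ) (β A : ℝ) (hpos : ∀ y, 0 < y → 0 < F y)
    (hA : ∀ y, 0 < y → y ≤ 1 → y ^ β * F y ≤ A) (hβ : 0 < β) :
    Filter.limsup (fun y : ℝ => Real.log (F y) / Real.log (1 / y)) (𝓝[>] (0:ℝ)) ≤ β := by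
  rw [Filter.limsup_eq]
  by_cases hb : BddBelow {a | ∀ᶠ y in 𝓝[>] (0:ℝ), Real.log (F y) / Real.log (1 / y) ≤ a}
  swap
  · rw [Real.sInf_of_not_bddBelow hb]; exact hβ.le
  refine le_of_forall_pos_le_add fun ε hε => csInf_le hb ?_
  have hlim : Tendsto (fun y : ℝ => Real.log (1 / y)) (𝓝[>] (0:ℝ)) atTop := by
    simp only [one_div]
    exact Real.tendsto_log_atTop.comp tendsto_inv_nhdsGT_zero
  have hmem : Ioc (0:ℝ) 1 ∈ 𝓝[>] (0:ℝ) := Ioc_mem_nhdsGT zero_lt_one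
  filter_upwards [hmem, hlim.eventually_ge_atTop (Real.log A / ε), hlim.eventually_gt_atTop 0]
    with y hy h1 h2
  have hF := hpos y hy.1
  have hyp : 0 < y ^ β := Real.rpow_pos_of_pos hy.1 _
  rw [div_le_iff₀ h2]
  have h3 := Real.log_le_log (mul_pos hyp hF) (hA y hy.1 hy.2)
  rw [Real.log_mul hyp.ne' hF.ne', Real.log_rpow hy.1] at h3
  rw [div_le_iff₀ hε] at h1
  have e : Real.log (1 / y) = - Real.log y := by rw [one_div, Real.log_inv]
  rw [e] at h1 ⊢
  linarith

theorem stmt10 (β₀ : ℝ) (hβ₀ : 0 < β₀) (g : ℂ → ℂ)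
    (hg : DifferentiableOn ℂ g {z : ℂ | 0 < z.im})
    (hper : ∀ z : ℂ, 0 < z.im → g (z + 1) = g z)
    (hbloch : ∀ z : ℂ, 0 < z.im → 2 * z.im * ‖deriv g z‖ ≤ β₀)
    (hdecay : ∀ ε : ℝ, 0 < ε → ∃ Y : ℝ, ∀ x y : ℝ, Y ≤ y →
      ‖g ((x : ℂ) + (y : ℂ) * Complex.I)‖ < ε)
    (p : ℂ) (hp : p ≠ 0)
    (β : ℝ) (hβ : 0 < β) (hβeq : β^2 + β = β₀^2 * ‖p‖^2 / 4) :
    Filter.limsup (fun y : ℝ => Real.log (Ip g p y) / Real.log (1 / y)) (𝓝[>] (0:ℝ)) ≤ β ∧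
    Filter.limsup (fun y : ℝ => Real.log (Ip g p y) / Real.log (1 / y)) (𝓝[>] (0:ℝ)) ≤
      β₀^2 * ‖p‖^2 / 4 := by
  have hop : IsOpen {z : ℂ | 0 < z.im} := isOpen_lt continuous_const Complex.continuous_im
  have hg1 : DifferentiableOn ℂ (deriv g) {z : ℂ | 0 < z.im} := hg.deriv hop
  have hg2 : DifferentiableOn ℂ (deriv (deriv g)) {z : ℂ | 0 < z.im} := hg1.deriv hop
  have him : ∀ x t : ℝ, ((x : ℂ) + (t : ℂ) * Complex.I).im = t := by intro x t; simp
  have hmem : ∀ x t : ℝ, 0 < t → ((x : ℂ) + (t : ℂ) * Complex.I) ∈ {z : ℂ | 0 < z.im} := by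
    intro x t ht; rw [mem_setOf_eq, him]; exact ht
  have c2 : ∀ G : ℂ → ℂ, DifferentiableOn ℂ G {z : ℂ | 0 < z.im} →
      ContinuousOn (fun q : ℝ × ℝ => (p * G ((q.1 : ℂ) + (q.2 : ℂ) * Complex.I)).re) {q | 0 < q.2} ∧
      ContinuousOn (fun q : ℝ × ℝ => (p * G ((q.1 : ℂ) + (q.2 : ℂ) * Complex.I)).im) {q | 0 < q.2} := by
    intro G hG
    have h : ContinuousOn (fun q : ℝ × ℝ => p * G ((q.1 : ℂ) + (q.2 : ℂ) * Complex.I))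
        {q | 0 < q.2} := continuousOn_const.mul
      (hG.continuousOn.comp (by fun_prop) (fun q hq => hmem q.1 q.2 hq))
    exact ⟨Complex.continuous_re.comp_continuousOn h, Complex.continuous_im.comp_continuousOn h⟩
  have c1 : ∀ G : ℂ → ℂ, DifferentiableOn ℂ G {z : ℂ | 0 < z.im} → ∀ t : ℝ, 0 < t →
      Continuous (fun x : ℝ => (p * G ((x : ℂ) + (t : ℂ) * Complex.I)).re) ∧
      Continuous (fun x : ℝ => (p * G ((x : ℂ) + (t : ℂ) * Complex.I)).im) := by
    intro G hG t ht
    have h : Continuous (fun x : ℝ => p * G ((x : ℂ) + (t : ℂ) * Complex.I)) :=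
      continuous_const.mul
        (hG.continuousOn.comp_continuous (by fun_prop) (fun x => hmem x t ht))
    exact ⟨Complex.continuous_re.comp h, Complex.continuous_im.comp h⟩
  have dy : ∀ G : ℂ → ℂ, DifferentiableOn ℂ G {z : ℂ | 0 < z.im} → ∀ x t : ℝ, 0 < t →
      HasDerivAt (fun s : ℝ => p * G ((x : ℂ) + (s : ℂ) * Complex.I))
        (p * (deriv G ((x : ℂ) + (t : ℂ) * Complex.I) * Complex.I)) t := by
    intro G hG x t ht
    have h0 := (hG.differentiableAt (hop.mem_nhds (hmem x t ht))).hasDerivAt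
    have h1 : HasDerivAt (fun s : ℝ => (x : ℂ) + (s : ℂ) * Complex.I) (1 * Complex.I) t :=
      ((Complex.ofRealCLM.hasDerivAt (x := t)).mul_const Complex.I).const_add _
    have h2 := (h0.comp t h1).const_mul p
    rw [one_mul] at h2
    exact h2
  have dx : ∀ G : ℂ → ℂ, DifferentiableOn ℂ G {z : ℂ | 0 < z.im} → ∀ x t : ℝ, 0 < t →
      HasDerivAt (fun s : ℝ => p * G ((s : ℂ) + (t : ℂ) * Complex.I))
        (p * deriv G ((x : ℂ) + (t : ℂ) * Complex.I)) x := by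
    intro G hG x t ht
    have h0 := (hG.differentiableAt (hop.mem_nhds (hmem x t ht))).hasDerivAt
    have h1 : HasDerivAt (fun s : ℝ => (s : ℂ) + (t : ℂ) * Complex.I) 1 x :=
      (Complex.ofRealCLM.hasDerivAt (x := x)).add_const _
    have h2 := (h0.comp x h1).const_mul p
    rw [mul_one] at h2
    exact h2
  have dre : ∀ (u : ℝ → ℂ) (u' : ℂ) (t : ℝ), HasDerivAt u u' t →
      HasDerivAt (fun s => (u s).re) u'.re t := fun u u' t h =>
    Complex.reCLM.hasFDerivAt.comp_hasDerivAt t h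
  have dim : ∀ (u : ℝ → ℂ) (u' : ℂ) (t : ℝ), HasDerivAt u u' t →
      HasDerivAt (fun s => (u s).im) u'.im t := fun u u' t h =>
    Complex.imCLM.hasFDerivAt.comp_hasDerivAt t h
  let z : ℝ → ℝ → ℂ := fun x t => (x : ℂ) + (t : ℂ) * Complex.I
  let E : ℝ → ℝ → ℝ := fun x t => Real.exp ((p * g (z x t)).re)
  let E1 : ℝ → ℝ → ℝ := fun x t => -(E x t * (p * deriv g (z x t)).im)
  let E2 : ℝ → ℝ → ℝ := fun x t => E x t * ((p * deriv g (z x t)).im ^ 2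
    - (p * deriv (deriv g) (z x t)).re)
  let X : ℝ → ℝ → ℝ := fun x t => E x t * (p * deriv g (z x t)).re
  let X1 : ℝ → ℝ → ℝ := fun x t => E x t * ((p * deriv g (z x t)).re ^ 2
    + (p * deriv (deriv g) (z x t)).re)
  have cE : ∀ t, 0 < t → Continuous (fun x => E x t) := by
    intro t ht; obtain ⟨_, _⟩ := c1 g hg t ht; simp only [E, z]; fun_prop
  have cE1 : ∀ t, 0 < t → Continuous (fun x => E1 x t) := by
    intro t ht; obtain ⟨_, _⟩ := c1 g hg t ht; obtain ⟨_, _⟩ := c1 _ hg1 t ht; simp only [E1, E, z]; fun_prop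
  have cE2 : ∀ t, 0 < t → Continuous (fun x => E2 x t) := by
    intro t ht; obtain ⟨_, _⟩ := c1 g hg t ht; obtain ⟨_, _⟩ := c1 _ hg1 t ht; obtain ⟨_, _⟩ := c1 _ hg2 t ht
    simp only [E2, E, z]; fun_prop
  have cX1 : ∀ t, 0 < t → Continuous (fun x => X1 x t) := by
    intro t ht; obtain ⟨_, _⟩ := c1 g hg t ht; obtain ⟨_, _⟩ := c1 _ hg1 t ht; obtain ⟨_, _⟩ := c1 _ hg2 t ht
    simp only [X1, E, z]; fun_prop
  have cE1' : ContinuousOn (fun q : ℝ × ℝ => E1 q.1 q.2) {q | 0 < q.2} := by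
    obtain ⟨_, _⟩ := c2 g hg; obtain ⟨_, _⟩ := c2 _ hg1; simp only [E1, E, z]; fun_prop
  have cE2' : ContinuousOn (fun q : ℝ × ℝ => E2 q.1 q.2) {q | 0 < q.2} := by
    obtain ⟨_, _⟩ := c2 g hg; obtain ⟨_, _⟩ := c2 _ hg1; obtain ⟨_, _⟩ := c2 _ hg2; simp only [E2, E, z]; fun_prop
  have dE : ∀ x t, 0 < t → HasDerivAt (fun s => E x s) (E1 x t) t := by
    intro x t ht
    have := (dre _ _ _ (dy g hg x t ht)).exp
    refine this.congr_deriv ?_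
    simp only [E1, E, z, Complex.mul_re, Complex.mul_im, Complex.I_re, Complex.I_im]
    ring
  have dE1 : ∀ x t, 0 < t → HasDerivAt (fun s => E1 x s) (E2 x t) t := by
    intro x t ht
    have := ((dE x t ht).mul (dim _ _ _ (dy _ hg1 x t ht))).neg
    refine this.congr_deriv ?_
    simp only [E2, E1, z, Complex.mul_re, Complex.mul_im, Complex.I_re, Complex.I_im]
    ring
  have dX : ∀ x t, 0 < t → HasDerivAt (fun s => X s t) (X1 x t) x := by
    intro x t ht
    have := ((dre _ _ _ (dx g hg x t ht)).exp).mul (dre _ _ _ (dx _ hg1 x t ht))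
    refine this.congr_deriv ?_
    simp only [X1, E, z]
    ring
  have hder : ∀ w : ℂ, 0 < w.im → deriv g (w + 1) = deriv g w := by
    intro w hw
    rw [← deriv_comp_add_const]
    apply Filter.EventuallyEq.deriv_eq
    filter_upwards [hop.mem_nhds hw] with v hv
    exact hper v hv
  have hX0 : ∀ t, 0 < t → ∫ x in (0:ℝ)..1, X1 x t = 0 := by
    intro t ht
    rw [intervalIntegral.integral_eq_sub_of_hasDerivAt (f := fun x => X x t)
      (fun x _ => dX x t ht) ((cX1 t ht).intervalIntegrable _ _)]
    have e : z 1 t = z 0 t + 1 := by simp only [z]; push_cast; ring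
    have h0 : 0 < (z 0 t).im := hmem 0 t ht
    simp only [X, E]
    rw [e, hper _ h0, hder _ h0, sub_self]
  have hpos : ∀ y, 0 < y → 0 < Ip g p y := by
    intro y hy
    exact intervalIntegral.intervalIntegral_pos_of_pos_on ((cE y hy).intervalIntegrable _ _)
      (fun x _ => Real.exp_pos _) zero_lt_one
  have key : ∀ y, 0 < y → y^2 * (∫ x in (0:ℝ)..1, E2 x y) ≤ (β^2 + β) * Ip g p y := by
    intro y hy
    have e : ∫ x in (0:ℝ)..1, E2 x y = ∫ x in (0:ℝ)..1, (E2 x y + X1 x y) := by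
      rw [intervalIntegral.integral_add ((cE2 y hy).intervalIntegrable _ _)
        ((cX1 y hy).intervalIntegrable _ _), hX0 y hy, add_zero]
    have e' : Ip g p y = ∫ x in (0:ℝ)..1, E x y := rfl
    rw [e, e', ← intervalIntegral.integral_const_mul, ← intervalIntegral.integral_const_mul]
    apply intervalIntegral.integral_mono_on zero_le_one
    · exact (((cE2 y hy).add (cX1 y hy)).const_mul _).intervalIntegrable _ _
    · exact ((cE y hy).const_mul _).intervalIntegrable _ _
    · intro x _
      have hn : (p * deriv g (z x y)).re ^ 2 + (p * deriv g (z x y)).im ^ 2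
          = (‖p‖ * ‖deriv g (z x y)‖)^2 := by
        rw [← norm_mul, Complex.sq_norm, Complex.normSq_apply]; ring
      have hb := hbloch (z x y) (hmem x y hy)
      rw [him x y] at hb
      have e3 : y^2 * (E2 x y + X1 x y) = E x y * (‖p‖^2 * (2 * y * ‖deriv g (z x y)‖)^2 / 4) := by
        simp only [E2, X1]
        linear_combination (y^2 * E x y) * hn
      rw [e3, hβeq, mul_comm]
      have hE : 0 < E x y := Real.exp_pos _
      have h0 : 0 ≤ 2 * y * ‖deriv g (z x y)‖ := by positivity
      have hsq : (2 * y * ‖deriv g (z x y)‖)^2 ≤ β₀^2 := by gcongr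
      refine mul_le_mul_of_nonneg_right ?_ hE.le
      nlinarith [mul_le_mul_of_nonneg_left hsq (sq_nonneg ‖p‖)]
  obtain ⟨A, hA⟩ := compare_aux (Ip g p) (fun y => ∫ x in (0:ℝ)..1, E1 x y)
    (fun y => ∫ x in (0:ℝ)..1, E2 x y) β hβ
    (hasDerivAt_int_aux E E1 cE cE1' dE) (hasDerivAt_int_aux E1 E2 cE1 cE2' dE1) key
  have hmain := limsup_aux (Ip g p) β A hpos hA hβ
  refine ⟨hmain, hmain.trans ?_⟩
  rw [← hβeq]
  nlinarith [sq_nonneg β]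
end
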